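/- arXiv:1412.4023 — 2 statements merged into one kernel-verified Lean document; each statement's English description precedes it below -/
import Mathlib

section
/- For every ε ∈ (0,1] and every Borel probability measure f₀ on 𝕋×ℝ with finite first moment ∫|v| df₀(x,v) < ∞, there exists a global weak solution of the Vlasov–Poisson system with massless electrons (VPME)_ε with initial datum f₀. -/
open MeasureTheory Real Filter Topology

noncomputable section

abbrev 𝕋 := AddCircle (1 : ℝ)

noncomputable def torusRep (x : 𝕋) : ℝ := (AddCircle.equivIco 1 0 x : ℝ)

/-- The 1-Wasserstein (Kantorovich–Rubinstein) distance via the dual formulation. -/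
noncomputable def W1 (μ ν : Measure (𝕋 × ℝ)) : ℝ :=
  sSup {r : ℝ | ∃ φ : 𝕋 × ℝ → ℝ, LipschitzWith 1 φ ∧
    r = (∫ p, φ p ∂μ) - ∫ p, φ p ∂ν}

/-- Test functions on 𝕋 × ℝ, represented as smooth functions on ℝ × ℝ that are
1-periodic in the first variable and compactly supported in the second. -/
def TestFun (φ : ℝ × ℝ → ℝ) : Prop :=
  ContDiff ℝ (⊤ : ℕ∞) φ ∧ (∀ q : ℝ × ℝ, φ (q.1 + 1, q.2) = φ q) ∧
    ∃ R : ℝ, ∀ q : ℝ × ℝ, R ≤ |q.2| → φ q = 0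

/-- The weak (distributional) formulation of the Vlasov equation
∂ₜ f + v ∂ₓ f + E ∂ᵥ f = 0 on the time interval `I`. -/
def VlasovWeak (I : Set ℝ) (f : ℝ → Measure (𝕋 × ℝ)) (E : ℝ → ℝ → ℝ) : Prop :=
  ∀ φ : ℝ × ℝ → ℝ, TestFun φ →
    (∀ t ∈ I, ∃ K : NNReal, ∃ δ : ℝ, 0 < δ ∧ LipschitzOnWith K
        (fun s => ∫ p : 𝕋 × ℝ, φ (torusRep p.1, p.2) ∂(f s)) (I ∩ Metric.ball t δ)) ∧
    (∀ᵐ t ∂(volume : Measure ℝ), t ∈ I → HasDerivWithinAt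
        (fun s => ∫ p : 𝕋 × ℝ, φ (torusRep p.1, p.2) ∂(f s))
        (∫ p : 𝕋 × ℝ,
          (p.2 * fderiv ℝ φ (torusRep p.1, p.2) (1, 0)
            + E t (torusRep p.1) * fderiv ℝ φ (torusRep p.1, p.2) (0, 1)) ∂(f t)) I t)

/-- A weak solution of the (VPME)_ε system on the time interval `I`, with electric
potential `U` and electric field `E` (given as 1-periodic functions on ℝ). -/
structure IsVPMESol (ε : ℝ) (I : Set ℝ) (f : ℝ → Measure (𝕋 × ℝ))
    (U E : ℝ → ℝ → ℝ) : Prop where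
  prob : ∀ t ∈ I, IsProbabilityMeasure (f t)
  moment : ∀ t ∈ I, Integrable (fun p : 𝕋 × ℝ => |p.2|) (f t)
  weakCont : ∀ φ : BoundedContinuousFunction (𝕋 × ℝ) ℝ,
      ContinuousOn (fun t => ∫ p, φ p ∂(f t)) I
  U_per : ∀ t ∈ I, Function.Periodic (U t) 1
  U_lip : ∀ t ∈ I, ∃ K : NNReal, LipschitzWith K (U t)
  E_per : ∀ t ∈ I, Function.Periodic (E t) 1
  poisson : ∀ t ∈ I, ∀ ψ : ℝ → ℝ, ContDiff ℝ (⊤ : ℕ∞) ψ → Function.Periodic ψ 1 →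
      ε ^ 2 * ∫ x in Set.Ico (0:ℝ) 1, U t x * deriv (deriv ψ) x
        = (∫ x in Set.Ico (0:ℝ) 1, Real.exp (U t x) * ψ x)
          - ∫ p : 𝕋 × ℝ, ψ (torusRep p.1) ∂(f t)
  E_def : ∀ t ∈ I, ∀ x : ℝ,
      Tendsto (fun h : ℝ => (U t (x + h) - U t (x - h)) / (2 * h)) (𝓝[>] 0)
        (𝓝 (-(E t x)))
  vlasov : VlasovWeak I f E

/-!
With `a = 2 / ε²` the Poisson–Boltzmann equation reads `-(2 / a) U'' + 2 a U = (2 a U - exp U) + ρ`,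
and the operator on the left is inverted by an explicit Green kernel `G` on the torus. Truncating
the nonlinearity to the a priori range `[log (2 a min G), log (2 a)]` of `U` turns this into a fixed
point equation for a contraction, so `U` exists and depends continuously on `ρ` in the sup norm. The
field `E` is then a continuous part plus the convolution of `ρ` with an odd kernel whose only
singularity is a jump at `0`, and `|E|` is bounded by a constant `M`.

An Euler scheme, which freezes the force acting on each particle during a time step, yields laws on
the space of trajectories with `M`-Lipschitz velocity. They are tight by Arzelà–Ascoli; let `P` be a
limit law. The only obstacle to passing to the limit in the force term is the jump of the kernel at
coinciding particles. Since the kernel is odd, exchanging the two particles shows that the force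
term is continuous at every `f` for which almost no two particles are at the same place with
different velocities. The marginals of `P` have this property at almost every time: two
trajectories can only meet with different velocities at isolated times, so Fubini applies to
`P ⊗ P`.
-/

namespace VPME

/-! ### The torus -/

lemma torusRep_coe (x : ℝ) : torusRep x = Int.fract x := by
  simp [torusRep, AddCircle.coe_equivIco_mk_apply]

lemma torusRep_mem_Ico (x : 𝕋) : torusRep x ∈ Set.Ico (0 : ℝ) 1 := by
  simpa [torusRep] using (AddCircle.equivIco (1 : ℝ) 0 x).2

lemma coe_torusRep (x : 𝕋) : (torusRep x : 𝕋) = x :=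
  AddCircle.coe_equivIco

lemma torusRep_ne_zero {x : 𝕋} (hx : x ≠ 0) : torusRep x ≠ 0 := by
  contrapose! hx
  rw [← coe_torusRep x, hx, AddCircle.coe_zero]

lemma torusRep_neg {x : 𝕋} (hx : x ≠ 0) : torusRep (-x) = 1 - torusRep x := by
  have hx' := torusRep_ne_zero hx
  induction x using QuotientAddGroup.induction_on with | H r =>
  change torusRep (-(r : 𝕋)) = _
  rw [← AddCircle.coe_neg, torusRep_coe]
  rw [torusRep_coe] at hx'
  exact (Int.fract_neg hx').trans (by rw [torusRep_coe])

lemma continuousAt_torusRep {x : 𝕋} (hx : x ≠ 0) : ContinuousAt torusRep x :=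
  continuous_subtype_val.continuousAt.comp (AddCircle.continuousAt_equivIco 1 0 (by simpa using hx))

lemma measurable_torusRep : Measurable torusRep :=
  measurable_subtype_coe.comp (AddCircle.measurableEquivIco 1 0).measurable

lemma apply_torusRep_coe {β : Type*} {g : ℝ → β} (hg : Function.Periodic g 1) (x : ℝ) :
    g (torusRep x) = g x := by
  rw [torusRep_coe, Int.fract]
  simpa only [zsmul_eq_mul, mul_one] using hg.sub_zsmul_eq ⌊x⌋ (x := x)

instance : IsProbabilityMeasure (volume : Measure 𝕋) := ⟨by simp [AddCircle.measure_univ]⟩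

lemma norm_torus_le_half (x : 𝕋) : ‖x‖ ≤ 1 / 2 := by
  simpa using AddCircle.norm_le_half_period (1 : ℝ) (x := x) one_ne_zero

lemma norm_coe_torus_le_abs (x : ℝ) : ‖(x : 𝕋)‖ ≤ |x| := by
  simpa [UnitAddCircle.norm_eq] using round_le x 0

lemma norm_coe_torus_eq_abs {x : ℝ} (hx : |x| ≤ 1 / 2) : ‖(x : 𝕋)‖ = |x| := by
  rw [AddCircle.norm_coe_eq_abs_iff (1 : ℝ) one_ne_zero]
  simpa using hx

lemma setIntegral_Ico_coe_torus (F : 𝕋 → ℝ) :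
    ∫ x in Set.Ico (0 : ℝ) 1, F x = ∫ x, F x := by
  simpa [integral_Ico_eq_integral_Ioc] using UnitAddCircle.integral_preimage 0 F

/-! ### The Green kernel -/

/-- The profile on `[0, 1]` of the fundamental solution of the operator `-(2/a) ∂² + 2a` on the
torus. With `a = 2 / ε²` this operator is `-ε² ∂² + 2a`. -/
def greenProfile (a r : ℝ) : ℝ := cosh (a * (r - 1 / 2)) / (4 * sinh (a / 2))

/-- The derivative of `greenProfile` in its second argument. -/
def greenProfileDeriv (a r : ℝ) : ℝ := a * sinh (a * (r - 1 / 2)) / (4 * sinh (a / 2))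

/-- The fundamental solution of `-(2/a) ∂² + 2a` on the torus. -/
def green (a : ℝ) (x : 𝕋) : ℝ := greenProfile a ‖x‖

/-- The force kernel `-∂ₓ (green a)`. At the origin, where `green a` has a corner, it takes the
average `0` of its one-sided limits. -/
def greenForce (a : ℝ) (x : 𝕋) : ℝ := if x = 0 then 0 else -greenProfileDeriv a (torusRep x)

lemma hasDerivAt_greenProfile (a r : ℝ) :
    HasDerivAt (greenProfile a) (greenProfileDeriv a r) r := by
  have h := (((hasDerivAt_id' r).sub_const (1 / 2)).const_mul a).cosh.div_const (4 * sinh (a / 2))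
  exact h.congr_deriv (by rw [greenProfileDeriv]; ring)

lemma hasDerivAt_greenProfileDeriv (a r : ℝ) :
    HasDerivAt (greenProfileDeriv a) (a ^ 2 * greenProfile a r) r := by
  have h := ((((hasDerivAt_id' r).sub_const (1 / 2)).const_mul a).sinh.const_mul a).div_const
    (4 * sinh (a / 2))
  exact h.congr_deriv (by rw [greenProfile]; ring)

lemma continuous_greenProfile (a : ℝ) : Continuous (greenProfile a) := by
  unfold greenProfile; fun_prop

lemma continuous_greenProfileDeriv (a : ℝ) : Continuous (greenProfileDeriv a) := by
  unfold greenProfileDeriv; fun_prop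

lemma greenProfile_one_sub (a r : ℝ) : greenProfile a (1 - r) = greenProfile a r := by
  rw [greenProfile, greenProfile, ← cosh_neg]
  ring_nf

lemma greenProfileDeriv_one_sub (a r : ℝ) :
    greenProfileDeriv a (1 - r) = -greenProfileDeriv a r := by
  rw [greenProfileDeriv, greenProfileDeriv, ← neg_div, ← mul_neg, ← sinh_neg]
  ring_nf

lemma green_coe (a : ℝ) {r : ℝ} (hr : r ∈ Set.Icc (0 : ℝ) 1) : green a r = greenProfile a r := by
  unfold green
  rcases le_total r (1 / 2) with h | h
  · have hr' : |r| = r := abs_of_nonneg hr.1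
    rw [norm_coe_torus_eq_abs (by rwa [hr']), hr']
  · have hr' : |r - 1| = 1 - r := by rw [abs_of_nonpos (by linarith [hr.2]), neg_sub]
    have hshift : (r : 𝕋) = (r - 1 : ℝ) := by rw [AddCircle.coe_sub, AddCircle.coe_period, sub_zero]
    rw [hshift, norm_coe_torus_eq_abs (by linarith), hr', greenProfile_one_sub]

lemma green_neg (a : ℝ) (x : 𝕋) : green a (-x) = green a x := by simp [green]

lemma greenForce_zero (a : ℝ) : greenForce a 0 = 0 := if_pos rfl

lemma greenForce_neg (a : ℝ) (x : 𝕋) : greenForce a (-x) = -greenForce a x := by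
  by_cases hx : x = 0
  · simp [hx, greenForce_zero]
  · simp [greenForce, hx, torusRep_neg hx, greenProfileDeriv_one_sub]

lemma continuous_green (a : ℝ) : Continuous (green a) :=
  (continuous_greenProfile a).comp continuous_norm

lemma measurable_greenForce (a : ℝ) : Measurable (greenForce a) :=
  Measurable.ite (measurableSet_singleton 0) measurable_const
    ((continuous_greenProfileDeriv a).measurable.comp measurable_torusRep).neg

lemma continuousAt_greenForce (a : ℝ) {x : 𝕋} (hx : x ≠ 0) : ContinuousAt (greenForce a) x := by
  refine ((continuous_greenProfileDeriv a).continuousAt.comp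
    (continuousAt_torusRep hx)).neg.congr ?_
  filter_upwards [isOpen_ne.mem_nhds hx] with y hy
  simp only [greenForce, if_neg hy, Pi.neg_apply, Function.comp_apply]

section Bounds

variable {a : ℝ}

lemma abs_sub_half_le {r : ℝ} (hr : r ∈ Set.Icc (0 : ℝ) 1) : |r - 1 / 2| ≤ 1 / 2 := by
  rw [abs_le]
  constructor <;> linarith [hr.1, hr.2]

lemma abs_mul_sub_half_le (ha : 0 < a) {r : ℝ} (hr : r ∈ Set.Icc (0 : ℝ) 1) :
    |a * (r - 1 / 2)| ≤ a / 2 := by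
  rw [abs_mul, abs_of_pos ha]
  nlinarith [abs_sub_half_le hr]

lemma sinh_half_pos (ha : 0 < a) : 0 < sinh (a / 2) := sinh_pos_iff.2 (half_pos ha)

lemma abs_greenProfileDeriv_le (ha : 0 < a) {r : ℝ} (hr : r ∈ Set.Icc (0 : ℝ) 1) :
    |greenProfileDeriv a r| ≤ a / 4 := by
  have := sinh_half_pos ha
  have hm : |sinh (a * (r - 1 / 2))| ≤ sinh (a / 2) := by
    rw [abs_sinh, sinh_le_sinh]
    exact abs_mul_sub_half_le ha hr
  rw [greenProfileDeriv, abs_div, abs_mul, abs_of_pos ha,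
    abs_of_pos (by positivity : 0 < 4 * sinh (a / 2)), div_le_iff₀ (by positivity)]
  nlinarith

lemma norm_torus_mem_Icc (x : 𝕋) : ‖x‖ ∈ Set.Icc (0 : ℝ) 1 :=
  ⟨norm_nonneg x, (norm_torus_le_half x).trans (by norm_num)⟩

lemma abs_green_sub_green_le (ha : 0 < a) (x y : 𝕋) :
    |green a x - green a y| ≤ a / 4 * ‖x - y‖ := by
  have h : |green a x - green a y| ≤ a / 4 * |‖x‖ - ‖y‖| :=
    (convex_Icc (0 : ℝ) 1).norm_image_sub_le_of_norm_hasDerivWithin_le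
      (fun r _ => (hasDerivAt_greenProfile a r).hasDerivWithinAt)
      (fun _ hr => abs_greenProfileDeriv_le ha hr) (norm_torus_mem_Icc y) (norm_torus_mem_Icc x)
  exact h.trans (by gcongr; exact abs_norm_sub_norm_le x y)

lemma abs_greenForce_le (ha : 0 < a) (x : 𝕋) : |greenForce a x| ≤ a / 4 := by
  unfold greenForce
  split_ifs
  · rw [abs_zero]
    positivity
  · simpa using abs_greenProfileDeriv_le ha (Set.Ico_subset_Icc_self (torusRep_mem_Ico x))

lemma one_div_le_green (ha : 0 < a) (x : 𝕋) : 1 / (4 * sinh (a / 2)) ≤ green a x := by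
  have := sinh_half_pos ha
  unfold green greenProfile
  gcongr
  exact one_le_cosh _

lemma green_pos (ha : 0 < a) (x : 𝕋) : 0 < green a x :=
  (by have := sinh_half_pos ha; positivity : 0 < 1 / (4 * sinh (a / 2))).trans_le
    (one_div_le_green ha x)

lemma cosh_le_two_mul_sinh {b : ℝ} (hb : 1 ≤ b) : cosh b ≤ 2 * sinh b := by
  have hexp : 2 ≤ exp b := by linarith [add_one_le_exp b]
  have hexp_neg : exp (-b) ≤ 1 / 2 := by
    rw [exp_neg, inv_eq_one_div]
    gcongr
  rw [cosh_eq, sinh_eq]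
  linarith

lemma green_le_one (ha : 2 ≤ a) (x : 𝕋) : green a x ≤ 1 := by
  have hs := sinh_half_pos (by linarith : 0 < a)
  have hcosh : cosh (a * (‖x‖ - 1 / 2)) ≤ cosh (a / 2) := by
    rw [cosh_le_cosh]
    exact (abs_mul_sub_half_le (by linarith) (norm_torus_mem_Icc x)).trans (le_abs_self _)
  have hcosh_sinh := cosh_le_two_mul_sinh (b := a / 2) (by linarith)
  rw [green, greenProfile, div_le_one (by positivity)]
  linarith

end Bounds

lemma tendsto_symm_slope_of_hasDerivAt {g : ℝ → ℝ} {g' x : ℝ} (hg : HasDerivAt g g' x) :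
    Tendsto (fun h : ℝ => (g (x + h) - g (x - h)) / (2 * h)) (𝓝[>] 0) (𝓝 g') := by
  have hadd : HasDerivAt (fun t => g (x + t)) g' 0 :=
    HasDerivAt.comp_const_add x 0 (by simpa using hg)
  have hsub : HasDerivAt (fun t => g (x - t)) (-g') 0 :=
    HasDerivAt.comp_const_sub x 0 (by simpa using hg)
  have hslope := (hadd.sub hsub).tendsto_slope_zero_right.const_mul (1 / 2)
  rw [show (1 / 2 : ℝ) * (g' - -g') = g' by ring] at hslope
  refine hslope.congr fun t => ?_
  simp only [zero_add, add_zero, sub_zero, sub_self, Pi.sub_apply, smul_eq_mul]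
  field

lemma tendsto_symm_slope_green (a : ℝ) (x : 𝕋) :
    Tendsto (fun h : ℝ => (green a (x + h) - green a (x - h)) / (2 * h)) (𝓝[>] 0)
      (𝓝 (-greenForce a x)) := by
  by_cases hx : x = 0
  · simp [hx, green_neg, greenForce_zero]
  have hmem : torusRep x ∈ Set.Ioo (0 : ℝ) 1 :=
    ⟨(torusRep_mem_Ico x).1.lt_of_ne' (torusRep_ne_zero hx), (torusRep_mem_Ico x).2⟩
  have hd : HasDerivAt (fun r : ℝ => green a r) (-greenForce a x) (torusRep x) := by
    rw [greenForce, if_neg hx, neg_neg]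
    refine (hasDerivAt_greenProfile a _).congr_of_eventuallyEq ?_
    filter_upwards [Ioo_mem_nhds hmem.1 hmem.2] with r hr
    exact green_coe a (Set.Ioo_subset_Icc_self hr)
  simpa only [AddCircle.coe_add, AddCircle.coe_sub, coe_torusRep]
    using tendsto_symm_slope_of_hasDerivAt hd

lemma abs_symm_slope_green_le {a : ℝ} (ha : 0 < a) (x : 𝕋) {h : ℝ} (hh : 0 < h) :
    |(green a (x + h) - green a (x - h)) / (2 * h)| ≤ a / 4 := by
  rw [abs_div, abs_of_pos (by positivity : 0 < 2 * h), div_le_iff₀ (by positivity)]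
  refine (abs_green_sub_green_le ha _ _).trans ?_
  gcongr
  have hsub : x + h - (x - h) = (2 * h : ℝ) := by
    rw [two_mul, AddCircle.coe_add]
    abel
  rw [hsub]
  exact (norm_coe_torus_le_abs _).trans_eq (abs_of_pos (by positivity))

lemma periodic_deriv {E : Type*} [NormedAddCommGroup E] [NormedSpace ℝ E] {ψ : ℝ → E} {c : ℝ}
    (hp : Function.Periodic ψ c) : Function.Periodic (deriv ψ) c := fun x => by
  rw [← deriv_comp_add_const, funext hp]

lemma integral_green_mul_helmholtz {a : ℝ} (ha : 0 < a) {θ : ℝ → ℝ} (hθ : ContDiff ℝ 2 θ)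
    (hp : Function.Periodic θ 1) :
    ∫ r in (0 : ℝ)..1, green a r * (-(2 / a) * deriv (deriv θ) r + 2 * a * θ r) = θ 0 := by
  have := sinh_half_pos ha
  have hθ' : ContDiff ℝ 1 (deriv θ) := ContDiff.deriv' (by simpa [one_add_one_eq_two] using hθ)
  have : Continuous (deriv (deriv θ)) := hθ'.continuous_deriv le_rfl
  have hgreen : ∀ r ∈ Set.uIcc (0 : ℝ) 1, green a r = greenProfile a r := fun r hr =>
    green_coe a (by rwa [Set.uIcc_of_le zero_le_one] at hr)
  rw [intervalIntegral.integral_congr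
    (g := fun r => greenProfile a r * (-(2 / a) * deriv (deriv θ) r + 2 * a * θ r))
    fun r hr => by simp only [hgreen r hr]]
  have hprimitive : ∀ r, HasDerivAt
      (fun r => -(2 / a) * (greenProfile a r * deriv θ r - greenProfileDeriv a r * θ r))
      (greenProfile a r * (-(2 / a) * deriv (deriv θ) r + 2 * a * θ r)) r := fun r => by
    have hd := (hθ.differentiable (by simp) r).hasDerivAt
    have hdd := (hθ'.differentiable (by simp) r).hasDerivAt
    refine ((((hasDerivAt_greenProfile a r).mul hdd).sub
      ((hasDerivAt_greenProfileDeriv a r).mul hd)).const_mul _).congr_deriv ?_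
    field
  have hcont : Continuous fun r =>
      greenProfile a r * (-(2 / a) * deriv (deriv θ) r + 2 * a * θ r) := by
    have := continuous_greenProfile a
    have := hθ.continuous
    fun_prop
  rw [intervalIntegral.integral_eq_sub_of_hasDerivAt (fun r _ => hprimitive r)
    (hcont.intervalIntegrable _ _)]
  have hjump : greenProfileDeriv a 0 = -(a / 4) := by
    rw [greenProfileDeriv, zero_sub, mul_neg, sinh_neg, mul_one_div]
    field
  have hprofile := greenProfile_one_sub a 0
  have hprofileDeriv := greenProfileDeriv_one_sub a 0
  rw [sub_zero] at hprofile hprofileDeriv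
  rw [hprofile, hprofileDeriv, hjump, hp.eq, (periodic_deriv hp).eq]
  field

/-! ### Convolution against measures on the torus -/

section Convolution

/-- The convolution of the kernel `k` with the signed measure `g • ν` on the torus. It covers both
the smooth sources (`ν` the Lebesgue measure) and the particle density (`g = 1`). -/
def conv (k : 𝕋 → ℝ) (ν : Measure 𝕋) (g : 𝕋 → ℝ) (x : 𝕋) : ℝ := ∫ y, k (x - y) * g y ∂ν

lemma abs_integral_le_of_abs_le {α : Type*} [MeasurableSpace α] {μ : Measure α}
    [IsProbabilityMeasure μ] {g : α → ℝ} {C : ℝ} (hg : ∀ x, |g x| ≤ C) : |∫ x, g x ∂μ| ≤ C := by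
  simpa using norm_integral_le_of_norm_le_const (μ := μ) (f := g) (Eventually.of_forall hg)

variable {k : 𝕋 → ℝ} {ν : Measure 𝕋} {g : 𝕋 → ℝ} {A B L : ℝ}

lemma integrable_conv_integrand (hk : Measurable k) (hA : ∀ x, |k x| ≤ A) (hg : Integrable g ν)
    (x : 𝕋) : Integrable (fun y => k (x - y) * g y) ν :=
  hg.bdd_mul (hk.comp (measurable_const.sub measurable_id)).aestronglyMeasurable
    (Eventually.of_forall fun _ => hA _)

lemma abs_conv_le [IsProbabilityMeasure ν] (hA : ∀ x, |k x| ≤ A) (hB : ∀ x, |g x| ≤ B) (x : 𝕋) :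
    |conv k ν g x| ≤ A * B :=
  abs_integral_le_of_abs_le fun y => by
    rw [abs_mul]
    exact mul_le_mul (hA _) (hB _) (abs_nonneg _) ((abs_nonneg _).trans (hA 0))

lemma exists_abs_le_of_continuous {g : 𝕋 → ℝ} (hg : Continuous g) : ∃ C, ∀ x, |g x| ≤ C :=
  ⟨_, fun x => (⟨g, hg⟩ : C(𝕋, ℝ)).norm_coe_le_norm x⟩

lemma continuous_conv (hk : Continuous k) (hg : Integrable g ν) : Continuous (conv k ν g) := by
  obtain ⟨A, hA⟩ := exists_abs_le_of_continuous hk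
  refine continuous_of_dominated
    (fun x => (integrable_conv_integrand hk.measurable hA hg x).aestronglyMeasurable)
    (bound := fun y => A * |g y|) (fun x => Eventually.of_forall fun y => ?_)
    (hg.abs.const_mul A) (Eventually.of_forall fun y => by fun_prop)
  rw [norm_mul]
  exact mul_le_mul_of_nonneg_right (hA _) (abs_nonneg _)

lemma abs_conv_sub_conv_le [IsProbabilityMeasure ν] (hk : Continuous k)
    (hL : ∀ x y, |k x - k y| ≤ L * ‖x - y‖) (hg : Integrable g ν) (hB : ∀ x, |g x| ≤ B)
    (x x' : 𝕋) : |conv k ν g x - conv k ν g x'| ≤ L * B * ‖x - x'‖ := by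
  obtain ⟨A, hA⟩ := exists_abs_le_of_continuous hk
  have hint := integrable_conv_integrand hk.measurable hA hg
  rw [conv, conv, ← integral_sub (hint x) (hint x')]
  refine abs_integral_le_of_abs_le fun y => ?_
  have h := hL (x - y) (x' - y)
  rw [sub_sub_sub_cancel_right] at h
  calc |k (x - y) * g y - k (x' - y) * g y| = |k (x - y) - k (x' - y)| * |g y| := by
        rw [← sub_mul, abs_mul]
    _ ≤ L * ‖x - x'‖ * B := mul_le_mul h (hB y) (abs_nonneg _) ((abs_nonneg _).trans h)
    _ = L * B * ‖x - x'‖ := by ring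

lemma measurable_conv [SFinite ν] (hk : Measurable k) (hg : Measurable g) :
    Measurable (conv k ν g) :=
  (StronglyMeasurable.integral_prod_right (f := fun x y => k (x - y) * g y)
    (by fun_prop : Measurable fun q : 𝕋 × 𝕋 => k (q.1 - q.2) * g q.2).stronglyMeasurable).measurable

lemma tendsto_symm_slope_conv_green {a : ℝ} (ha : 0 < a) (hg : Integrable g ν) (x : 𝕋) :
    Tendsto (fun h : ℝ => (conv (green a) ν g (x + h) - conv (green a) ν g (x - h)) / (2 * h))
      (𝓝[>] 0) (𝓝 (-conv (greenForce a) ν g x)) := by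
  obtain ⟨A, hA⟩ := exists_abs_le_of_continuous (continuous_green a)
  have hint := integrable_conv_integrand (continuous_green a).measurable hA hg
  have hslope : ∀ h : ℝ, (conv (green a) ν g (x + h) - conv (green a) ν g (x - h)) / (2 * h)
      = ∫ y, (green a (x - y + h) - green a (x - y - h)) / (2 * h) * g y ∂ν := fun h => by
    rw [conv, conv, ← integral_sub (hint _) (hint _), ← integral_div]
    congr with y
    rw [← add_sub_right_comm, sub_right_comm x y]
    ring
  simp only [hslope]
  rw [conv, ← integral_neg]
  simp only [← neg_mul]
  refine tendsto_integral_filter_of_dominated_convergence (fun y => a / 4 * |g y|)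
    (Eventually.of_forall fun h => ?_) ?_ (hg.abs.const_mul _)
    (Eventually.of_forall fun y => (tendsto_symm_slope_green a (x - y)).mul_const _)
  · have := continuous_green a
    exact (by fun_prop : Continuous fun y =>
      (green a (x - y + h) - green a (x - y - h)) / (2 * h)).aestronglyMeasurable.mul hg.1
  · filter_upwards [self_mem_nhdsWithin] with h hh
    refine Eventually.of_forall fun y => ?_
    rw [norm_mul]
    exact mul_le_mul_of_nonneg_right (abs_symm_slope_green_le ha _ hh) (abs_nonneg _)

lemma integral_green {a : ℝ} (ha : 0 < a) : ∫ y, green a y = 1 / (2 * a) := by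
  have h := integral_green_mul_helmholtz ha (θ := fun _ => 1) contDiff_const (fun _ => rfl)
  simp only [deriv_const', mul_zero, zero_add, mul_one, intervalIntegral.integral_mul_const] at h
  have h' := UnitAddCircle.intervalIntegral_preimage 0 (green a)
  rw [zero_add] at h'
  rw [← h', eq_div_iff (by positivity), h]

lemma integral_green_sub {a : ℝ} (ha : 0 < a) (x : 𝕋) : ∫ y, green a (x - y) = 1 / (2 * a) := by
  rw [integral_sub_left_eq_self (green a) volume x, integral_green ha]

lemma integrable_green_sub (a : ℝ) [IsFiniteMeasure ν] (x : 𝕋) :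
    Integrable (fun y => green a (x - y)) ν := by
  obtain ⟨A, hA⟩ := exists_abs_le_of_continuous (continuous_green a)
  simpa using integrable_conv_integrand (continuous_green a).measurable hA
    (integrable_const (1 : ℝ)) x

end Convolution

lemma integrable_continuousMap (ν : Measure 𝕋) [IsFiniteMeasure ν] (g : C(𝕋, ℝ)) :
    Integrable g ν :=
  g.continuous.integrable_of_hasCompactSupport (.of_compactSpace g)

/-- The convolution of `green a` with a measure of continuous density, as a continuous function. -/
def greenConv (a : ℝ) (ν : Measure 𝕋) [IsFiniteMeasure ν] (g : C(𝕋, ℝ)) : C(𝕋, ℝ) :=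
  ⟨conv (green a) ν g, continuous_conv (continuous_green a)
    (integrable_continuousMap ν g)⟩

lemma integrable_green_sub_mul (a : ℝ) (ν : Measure 𝕋) [IsFiniteMeasure ν] (g : C(𝕋, ℝ)) (x : 𝕋) :
    Integrable (fun y => green a (x - y) * g y) ν := by
  obtain ⟨A, hA⟩ := exists_abs_le_of_continuous (continuous_green a)
  exact integrable_conv_integrand (continuous_green a).measurable hA
    (integrable_continuousMap ν g) x

lemma dist_greenConv_le {a : ℝ} (ha : 0 < a) (g g' : C(𝕋, ℝ)) :
    dist (greenConv a volume g) (greenConv a volume g') ≤ 1 / (2 * a) * dist g g' := by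
  rw [ContinuousMap.dist_le (by positivity)]
  intro x
  have hint := fun g => integrable_green_sub_mul a volume g x
  calc dist (greenConv a volume g x) (greenConv a volume g' x)
      = ‖∫ y, (green a (x - y) * g y - green a (x - y) * g' y)‖ := by
        rw [dist_eq_norm, integral_sub (hint g) (hint g')]
        rfl
    _ ≤ ∫ y, green a (x - y) * dist g g' :=
        norm_integral_le_of_norm_le ((integrable_green_sub a x).mul_const _)
          (Eventually.of_forall fun y => by
            rw [← mul_sub, norm_mul, Real.norm_of_nonneg (green_pos ha _).le, ← dist_eq_norm]
            exact mul_le_mul_of_nonneg_left (ContinuousMap.dist_apply_le_dist y)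
              (green_pos ha _).le)
    _ = 1 / (2 * a) * dist g g' := by rw [integral_mul_const, integral_green_sub ha]

/-! ### Joint continuity of the integral -/

lemma continuous_integral_boundedContinuousFunction_prod {X : Type*} [TopologicalSpace X]
    [MeasurableSpace X] [OpensMeasurableSpace X] :
    Continuous fun q : BoundedContinuousFunction X ℝ × ProbabilityMeasure X =>
      ∫ x, q.1 x ∂(q.2 : Measure X) := by
  refine continuous_iff_continuousAt.2 fun ⟨F, μ⟩ => ?_
  have hμ : Tendsto (fun q : BoundedContinuousFunction X ℝ × ProbabilityMeasure X =>
      ∫ x, F x ∂(q.2 : Measure X)) (𝓝 (F, μ)) (𝓝 (∫ x, F x ∂(μ : Measure X))) :=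
    ((ProbabilityMeasure.continuous_integral_boundedContinuousFunction (f := F)).comp
      continuous_snd).tendsto (F, μ)
  have hF : Tendsto (fun q : BoundedContinuousFunction X ℝ × ProbabilityMeasure X => ‖q.1 - F‖)
      (𝓝 (F, μ)) (𝓝 0) :=
    (by fun_prop : Continuous fun q : BoundedContinuousFunction X ℝ × ProbabilityMeasure X =>
      ‖q.1 - F‖).tendsto' (F, μ) 0 (by simp)
  have hdiff : Tendsto (fun q : BoundedContinuousFunction X ℝ × ProbabilityMeasure X =>
      ∫ x, q.1 x ∂(q.2 : Measure X) - ∫ x, F x ∂(q.2 : Measure X)) (𝓝 (F, μ)) (𝓝 0) := by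
    refine squeeze_zero_norm (fun q => ?_) hF
    rw [← integral_sub (q.1.integrable _) (F.integrable _)]
    exact abs_integral_le_of_abs_le fun x => (q.1 - F).norm_coe_le_norm x
  simpa [ContinuousAt] using hdiff.add hμ

lemma continuous_greenConv_one (a : ℝ) :
    Continuous fun ρ : ProbabilityMeasure 𝕋 => greenConv a (ρ : Measure 𝕋) 1 := by
  let translates : C(𝕋, C(𝕋, ℝ)) := ContinuousMap.curry
    ⟨fun q : 𝕋 × 𝕋 => green a (q.1 - q.2), (continuous_green a).comp (by fun_prop)⟩
  refine ContinuousMap.continuous_of_continuous_uncurry _ ?_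
  have h : Continuous fun q : ProbabilityMeasure 𝕋 × 𝕋 =>
      (ContinuousMap.isometryEquivBoundedOfCompact 𝕋 ℝ (translates q.2), q.1) :=
    ((ContinuousMap.isometryEquivBoundedOfCompact 𝕋 ℝ).continuous.comp
      (translates.continuous.comp continuous_snd)).prodMk continuous_fst
  refine (continuous_integral_boundedContinuousFunction_prod.comp h).congr fun q => ?_
  simp [Function.uncurry, greenConv, conv, translates]

/-! ### The Poisson–Boltzmann equation -/

/-- A lower bound for `green a`. -/
def greenMin (a : ℝ) : ℝ := 1 / (4 * sinh (a / 2))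

/-- The a priori lower bound for the electric potential. -/
def potentialMin (a : ℝ) : ℝ := log (2 * a * greenMin a)

/-- The a priori upper bound for the electric potential. -/
def potentialMax (a : ℝ) : ℝ := log (2 * a)

/-- The nonlinearity of `-(2/a) U'' + 2a U = boltzmannSource a U + ρ`, which is the equation
`(2/a) U'' = exp U - ρ` after adding `2a U` to both sides. -/
def boltzmannSource (a u : ℝ) : ℝ := 2 * a * u - exp u

/-- `boltzmannSource` with its argument clamped to `[potentialMin a, potentialMax a]`, which makes
it nondecreasing and globally Lipschitz. -/
def truncatedSource (a u : ℝ) : ℝ :=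
  boltzmannSource a (max (potentialMin a) (min u (potentialMax a)))

section Source

variable {a : ℝ}

lemma greenMin_pos (ha : 0 < a) : 0 < greenMin a := by
  have := sinh_half_pos ha
  unfold greenMin
  positivity

lemma greenMin_le_one (ha : 2 ≤ a) : greenMin a ≤ 1 :=
  (one_div_le_green (by linarith) 0).trans (green_le_one ha 0)

lemma exp_potentialMax (ha : 0 < a) : exp (potentialMax a) = 2 * a :=
  exp_log (by linarith)

lemma exp_potentialMin (ha : 0 < a) : exp (potentialMin a) = 2 * a * greenMin a :=
  exp_log (by have := greenMin_pos ha; positivity)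

lemma potentialMin_le_potentialMax (ha : 2 ≤ a) : potentialMin a ≤ potentialMax a := by
  have ha0 : 0 < a := by linarith
  rw [← exp_le_exp, exp_potentialMin ha0, exp_potentialMax ha0]
  exact mul_le_of_le_one_right (by positivity) (greenMin_le_one ha)

lemma hasDerivAt_boltzmannSource (a u : ℝ) :
    HasDerivAt (boltzmannSource a) (2 * a - exp u) u :=
  (((hasDerivAt_id' u).const_mul (2 * a)).sub (hasDerivAt_exp u)).congr_deriv (by ring)

lemma deriv_boltzmannSource_mem_Icc (ha : 0 < a) {u : ℝ}
    (hu : u ∈ Set.Icc (potentialMin a) (potentialMax a)) :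
    2 * a - exp u ∈ Set.Icc 0 (2 * a * (1 - greenMin a)) := by
  have hmin := exp_le_exp.2 hu.1
  have hmax := exp_le_exp.2 hu.2
  rw [exp_potentialMin ha] at hmin
  rw [exp_potentialMax ha] at hmax
  constructor <;> linarith

lemma monotoneOn_boltzmannSource (ha : 0 < a) :
    MonotoneOn (boltzmannSource a) (Set.Icc (potentialMin a) (potentialMax a)) := by
  refine monotoneOn_of_deriv_nonneg (convex_Icc _ _)
    (fun u _ => (hasDerivAt_boltzmannSource a u).continuousAt.continuousWithinAt)
    (fun u _ => (hasDerivAt_boltzmannSource a u).differentiableAt.differentiableWithinAt)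
    fun u hu => ?_
  rw [(hasDerivAt_boltzmannSource a u).deriv]
  exact (deriv_boltzmannSource_mem_Icc ha (interior_subset hu)).1

lemma lipschitzOnWith_boltzmannSource (ha : 0 < a) :
    LipschitzOnWith (2 * a * (1 - greenMin a)).toNNReal (boltzmannSource a)
      (Set.Icc (potentialMin a) (potentialMax a)) :=
  (convex_Icc _ _).lipschitzOnWith_of_nnnorm_hasDerivWithin_le
    (fun u _ => (hasDerivAt_boltzmannSource a u).hasDerivWithinAt) fun u hu => by
      have h := deriv_boltzmannSource_mem_Icc ha hu
      rw [← NNReal.coe_le_coe, coe_nnnorm, Real.norm_of_nonneg h.1,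
        Real.coe_toNNReal _ (h.1.trans h.2)]
      exact h.2

lemma clamp_mem_Icc (ha : 2 ≤ a) (u : ℝ) :
    max (potentialMin a) (min u (potentialMax a)) ∈
      Set.Icc (potentialMin a) (potentialMax a) :=
  ⟨le_max_left _ _, max_le (potentialMin_le_potentialMax ha) (min_le_right _ _)⟩

lemma lipschitzWith_truncatedSource (ha : 2 ≤ a) :
    LipschitzWith (2 * a * (1 - greenMin a)).toNNReal (truncatedSource a) := by
  have hclamp : LipschitzWith 1 fun u => max (potentialMin a) (min u (potentialMax a)) :=
    (LipschitzWith.id.min_const _).const_max _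
  have h := (lipschitzOnWith_boltzmannSource (by linarith)).comp
    (hclamp.lipschitzOnWith (s := Set.univ)) fun u _ => clamp_mem_Icc ha u
  rwa [mul_one, lipschitzOnWith_univ] at h

lemma truncatedSource_mem_Icc (ha : 2 ≤ a) (u : ℝ) :
    truncatedSource a u ∈
      Set.Icc (boltzmannSource a (potentialMin a)) (boltzmannSource a (potentialMax a)) :=
  have hmono := monotoneOn_boltzmannSource (by linarith : 0 < a)
  have hle := potentialMin_le_potentialMax ha
  have hu := clamp_mem_Icc ha u
  ⟨hmono (Set.left_mem_Icc.2 hle) hu hu.1, hmono hu (Set.right_mem_Icc.2 hle) hu.2⟩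

lemma truncatedSource_eq {u : ℝ} (hu : u ∈ Set.Icc (potentialMin a) (potentialMax a)) :
    truncatedSource a u = boltzmannSource a u := by
  rw [truncatedSource, min_eq_left hu.2, max_eq_right hu.1]

end Source

lemma continuous_truncatedSource (a : ℝ) : Continuous (truncatedSource a) := by
  unfold truncatedSource boltzmannSource
  fun_prop

/-- The truncated nonlinearity acting on continuous functions. -/
def sourceMap (a : ℝ) (U : C(𝕋, ℝ)) : C(𝕋, ℝ) :=
  ContinuousMap.comp ⟨truncatedSource a, continuous_truncatedSource a⟩ U

/-- The Picard map whose fixed points solve the truncated Poisson–Boltzmann equation, `w` being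
the potential generated by the particles. -/
def picardMap (a : ℝ) (w U : C(𝕋, ℝ)) : C(𝕋, ℝ) := greenConv a volume (sourceMap a U) + w

/-- The electric potential generated by the particle density `ρ`: the unique fixed point of the
Picard map when `2 ≤ a`. -/
def potential (a : ℝ) (ρ : ProbabilityMeasure 𝕋) : C(𝕋, ℝ) :=
  Classical.epsilon (Function.IsFixedPt (picardMap a (greenConv a ρ 1)))

/-- The smooth part `2a U - exp U` of the charge density in the Poisson–Boltzmann equation. -/
def smoothSource (a : ℝ) (ρ : ProbabilityMeasure 𝕋) : C(𝕋, ℝ) := sourceMap a (potential a ρ)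

section Potential

variable {a : ℝ}

lemma lipschitzWith_sourceMap (ha : 2 ≤ a) :
    LipschitzWith (2 * a * (1 - greenMin a)).toNNReal (sourceMap a) :=
  LipschitzWith.of_dist_le_mul fun U V => (ContinuousMap.dist_le (by positivity)).2 fun x =>
    ((lipschitzWith_truncatedSource ha).dist_le_mul (U x) (V x)).trans <|
      mul_le_mul_of_nonneg_left (ContinuousMap.dist_apply_le_dist x) (by positivity)

lemma contractingWith_picardMap (ha : 2 ≤ a) (w : C(𝕋, ℝ)) :
    ContractingWith (1 - greenMin a).toNNReal (picardMap a w) := by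
  have ha0 : 0 < a := by linarith
  have hq : 0 ≤ 1 - greenMin a := by linarith [greenMin_le_one ha]
  refine ⟨by simpa using greenMin_pos ha0, LipschitzWith.of_dist_le_mul fun U V => ?_⟩
  have hsource := (lipschitzWith_sourceMap ha).dist_le_mul U V
  rw [Real.coe_toNNReal _ (by positivity)] at hsource
  calc dist (picardMap a w U) (picardMap a w V)
      = dist (greenConv a volume (sourceMap a U)) (greenConv a volume (sourceMap a V)) :=
        dist_add_right _ _ _
    _ ≤ 1 / (2 * a) * (2 * a * (1 - greenMin a) * dist U V) :=
        (dist_greenConv_le ha0 _ _).trans (by gcongr)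
    _ = (1 - greenMin a).toNNReal * dist U V := by
        rw [Real.coe_toNNReal _ hq]
        field

lemma isFixedPt_potential (ha : 2 ≤ a) (ρ : ProbabilityMeasure 𝕋) :
    Function.IsFixedPt (picardMap a (greenConv a ρ 1)) (potential a ρ) :=
  Classical.epsilon_spec (p := Function.IsFixedPt _)
    ⟨_, (contractingWith_picardMap ha (greenConv a ρ 1)).fixedPoint_isFixedPt⟩

lemma continuous_potential (ha : 2 ≤ a) : Continuous (potential a) := by
  refine continuous_iff_continuousAt.2 fun ρ₀ => tendsto_iff_dist_tendsto_zero.2 ?_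
  have hw : Tendsto (fun ρ : ProbabilityMeasure 𝕋 => dist (greenConv a ρ 1) (greenConv a ρ₀ 1) /
      (1 - (1 - greenMin a).toNNReal)) (𝓝 ρ₀) (𝓝 0) :=
    (((continuous_greenConv_one a).dist continuous_const).div_const _).tendsto' _ _ (by simp)
  refine squeeze_zero (fun _ => dist_nonneg) (fun ρ => ?_) hw
  have hcontr := contractingWith_picardMap ha (greenConv a ρ₀ 1)
  have h := hcontr.dist_le_of_fixedPoint (potential a ρ) (isFixedPt_potential ha ρ₀)
  refine h.trans_eq ?_
  congr 1
  nth_rw 1 [← isFixedPt_potential ha ρ]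
  exact dist_add_left _ _ _

lemma continuous_smoothSource (ha : 2 ≤ a) : Continuous (smoothSource a) :=
  (lipschitzWith_sourceMap ha).continuous.comp (continuous_potential ha)

lemma potential_eq_conv (ha : 2 ≤ a) (ρ : ProbabilityMeasure 𝕋) (x : 𝕋) :
    potential a ρ x = conv (green a) volume (smoothSource a ρ) x + conv (green a) ρ 1 x :=
  (DFunLike.congr_fun (isFixedPt_potential ha ρ) x).symm

lemma conv_green_one_mem_Icc (ha : 2 ≤ a) (ρ : ProbabilityMeasure 𝕋) (x : 𝕋) :
    conv (green a) ρ 1 x ∈ Set.Icc (greenMin a) 1 := by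
  have hint := integrable_green_sub a (ν := (ρ : Measure 𝕋)) x
  have hlower := integral_mono (integrable_const (greenMin a)) hint
    fun y => one_div_le_green (by linarith) (x - y)
  have hupper := integral_mono hint (integrable_const 1) fun y => green_le_one ha (x - y)
  simp only [integral_const, probReal_univ, one_smul] at hlower hupper
  simpa only [conv, Pi.one_apply, mul_one] using Set.mem_Icc.2 ⟨hlower, hupper⟩

lemma conv_green_mem_Icc (ha : 0 < a) {g : C(𝕋, ℝ)} {m M : ℝ} (hg : ∀ x, g x ∈ Set.Icc m M)
    (x : 𝕋) : conv (green a) volume g x ∈ Set.Icc (1 / (2 * a) * m) (1 / (2 * a) * M) := by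
  have hint := integrable_green_sub a (ν := volume) x
  have hintg := integrable_green_sub_mul a volume g x
  rw [← integral_green_sub ha x, ← integral_mul_const, ← integral_mul_const]
  exact ⟨integral_mono (hint.mul_const _) hintg fun y =>
      mul_le_mul_of_nonneg_left (hg y).1 (green_pos ha _).le,
    integral_mono hintg (hint.mul_const _) fun y =>
      mul_le_mul_of_nonneg_left (hg y).2 (green_pos ha _).le⟩

lemma potential_mem_Icc (ha : 2 ≤ a) (ρ : ProbabilityMeasure 𝕋) (x : 𝕋) :
    potential a ρ x ∈ Set.Icc (potentialMin a) (potentialMax a) := by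
  have ha0 : 0 < a := by linarith
  have hparticle := conv_green_one_mem_Icc ha ρ x
  have hsmooth := conv_green_mem_Icc ha0 (g := smoothSource a ρ)
    (fun y => truncatedSource_mem_Icc ha (potential a ρ y)) x
  have hmin : 1 / (2 * a) * boltzmannSource a (potentialMin a) = potentialMin a - greenMin a := by
    rw [boltzmannSource, exp_potentialMin ha0]
    field
  have hmax : 1 / (2 * a) * boltzmannSource a (potentialMax a) = potentialMax a - 1 := by
    rw [boltzmannSource, exp_potentialMax ha0]
    field
  rw [hmin, hmax] at hsmooth
  rw [potential_eq_conv ha]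
  constructor <;> linarith [hparticle.1, hparticle.2, hsmooth.1, hsmooth.2]

lemma smoothSource_apply (ha : 2 ≤ a) (ρ : ProbabilityMeasure 𝕋) (x : 𝕋) :
    smoothSource a ρ x = 2 * a * potential a ρ x - exp (potential a ρ x) :=
  truncatedSource_eq (potential_mem_Icc ha ρ x)

end Potential

/-! ### The electric field -/

lemma continuous_conv_volume {k g : 𝕋 → ℝ} {A : ℝ} (hk : Measurable k) (hA : ∀ x, |k x| ≤ A)
    (hg : Continuous g) : Continuous (conv k volume g) := by
  obtain ⟨B, hB⟩ := exists_abs_le_of_continuous hg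
  have hswap : conv k volume g = fun x => ∫ y, k y * g (x - y) := by
    ext x
    rw [← integral_sub_left_eq_self (fun y => k y * g (x - y)) volume x]
    simp only [sub_sub_cancel, conv]
  rw [hswap]
  refine continuous_of_dominated (bound := fun _ => A * B)
    (fun x => hk.aestronglyMeasurable.mul (by fun_prop)) (fun x => Eventually.of_forall fun y => ?_)
    (integrable_const _) (Eventually.of_forall fun y => by fun_prop)
  rw [norm_mul]
  exact mul_le_mul (hA y) (hB _) (abs_nonneg _) ((abs_nonneg _).trans (hA y))

/-- The convolution of `greenForce a` with a continuous density, as a continuous function. -/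
def greenForceConv {a : ℝ} (ha : 0 < a) (g : C(𝕋, ℝ)) : C(𝕋, ℝ) :=
  ⟨conv (greenForce a) volume g,
    continuous_conv_volume (measurable_greenForce a) (abs_greenForce_le ha) g.continuous⟩

lemma abs_conv_sub_conv_volume_le {k : 𝕋 → ℝ} {A : ℝ} (hk : Measurable k) (hA : ∀ x, |k x| ≤ A)
    (g g' : C(𝕋, ℝ)) (x : 𝕋) :
    |conv k volume g x - conv k volume g' x| ≤ A * dist g g' := by
  have hint := fun g => integrable_conv_integrand hk hA (integrable_continuousMap volume g) x
  rw [conv, conv, ← integral_sub (hint g) (hint g')]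
  refine abs_integral_le_of_abs_le fun y => ?_
  rw [← mul_sub, abs_mul]
  exact mul_le_mul (hA _) (ContinuousMap.dist_apply_le_dist (f := g) (g := g') y) (abs_nonneg _)
    ((abs_nonneg _).trans (hA 0))

lemma lipschitzWith_greenForceConv {a : ℝ} (ha : 0 < a) :
    LipschitzWith (a / 4).toNNReal (greenForceConv ha) :=
  LipschitzWith.of_dist_le_mul fun g g' => by
    rw [Real.coe_toNNReal _ (by positivity)]
    exact (ContinuousMap.dist_le (by positivity)).2
      (abs_conv_sub_conv_volume_le (measurable_greenForce a) (abs_greenForce_le ha) g g')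

/-- The electric field `-∂ₓ (potential a ρ)` generated by the particle density `ρ`, split into its
continuous part and its jump part. -/
def electricField (a : ℝ) (ρ : ProbabilityMeasure 𝕋) (x : 𝕋) : ℝ :=
  conv (greenForce a) volume (smoothSource a ρ) x + conv (greenForce a) ρ 1 x

/-- A uniform bound for `smoothSource`. -/
def sourceBound (a : ℝ) : ℝ :=
  max |boltzmannSource a (potentialMin a)| |boltzmannSource a (potentialMax a)|

section ElectricField

variable {a : ℝ}

lemma abs_smoothSource_le (ha : 2 ≤ a) (ρ : ProbabilityMeasure 𝕋) (x : 𝕋) :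
    |smoothSource a ρ x| ≤ sourceBound a :=
  have h := truncatedSource_mem_Icc ha (potential a ρ x)
  abs_le_max_abs_abs h.1 h.2

lemma abs_electricField_le (ha : 2 ≤ a) (ρ : ProbabilityMeasure 𝕋) (x : 𝕋) :
    |electricField a ρ x| ≤ a / 4 * (sourceBound a + 1) := by
  have hforce := abs_greenForce_le (by linarith : 0 < a)
  rw [mul_add]
  exact (abs_add_le _ _).trans (add_le_add (abs_conv_le hforce (abs_smoothSource_le ha ρ) x)
    (abs_conv_le hforce (by simp) x))

lemma measurable_electricField (a : ℝ) (ρ : ProbabilityMeasure 𝕋) :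
    Measurable (electricField a ρ) :=
  (measurable_conv (measurable_greenForce a) (smoothSource a ρ).continuous.measurable).add
    (measurable_conv (measurable_greenForce a) measurable_const)

lemma tendsto_symm_slope_potential (ha : 2 ≤ a) (ρ : ProbabilityMeasure 𝕋) (x : 𝕋) :
    Tendsto (fun h : ℝ => (potential a ρ (x + h) - potential a ρ (x - h)) / (2 * h)) (𝓝[>] 0)
      (𝓝 (-electricField a ρ x)) := by
  have ha0 : 0 < a := by linarith
  have hsmooth := tendsto_symm_slope_conv_green ha0
    (integrable_continuousMap volume (smoothSource a ρ)) x
  have hparticles := tendsto_symm_slope_conv_green ha0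
    (integrable_const (μ := (ρ : Measure 𝕋)) (1 : ℝ)) x
  rw [electricField, neg_add]
  refine (hsmooth.add hparticles).congr fun h => ?_
  rw [potential_eq_conv ha, potential_eq_conv ha, ← add_div, add_sub_add_comm]
  rfl

lemma exists_lipschitzWith_potential (ha : 2 ≤ a) (ρ : ProbabilityMeasure 𝕋) :
    ∃ K, LipschitzWith K fun x : ℝ => potential a ρ x := by
  have ha0 : 0 < a := by linarith
  have hB : 0 ≤ sourceBound a := (abs_nonneg _).trans (le_max_left _ _)
  refine ⟨(a / 4 * sourceBound a + a / 4 * 1).toNNReal, LipschitzWith.of_dist_le_mul fun x y => ?_⟩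
  rw [Real.coe_toNNReal _ (by positivity), Real.dist_eq, Real.dist_eq, potential_eq_conv ha,
    potential_eq_conv ha, add_sub_add_comm]
  have hsmooth := abs_conv_sub_conv_le (continuous_green a) (abs_green_sub_green_le ha0)
    (integrable_continuousMap volume (smoothSource a ρ)) (abs_smoothSource_le ha ρ) (x : 𝕋) y
  have hparticles := abs_conv_sub_conv_le (ν := (ρ : Measure 𝕋)) (g := 1) (B := 1)
    (continuous_green a) (abs_green_sub_green_le ha0) (integrable_const 1) (by simp) (x : 𝕋) y
  calc _ ≤ a / 4 * sourceBound a * ‖(x : 𝕋) - y‖ + a / 4 * 1 * ‖(x : 𝕋) - y‖ :=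
        (abs_add_le _ _).trans (add_le_add hsmooth hparticles)
    _ = (a / 4 * sourceBound a + a / 4 * 1) * ‖((x - y : ℝ) : 𝕋)‖ := by
        rw [AddCircle.coe_sub]
        ring
    _ ≤ _ := mul_le_mul_of_nonneg_left (norm_coe_torus_le_abs _) (by positivity)

end ElectricField

/-! ### Weak form of the Poisson–Boltzmann equation -/

lemma continuous_comp_torusRep {β : Type*} [TopologicalSpace β] {g : ℝ → β} (hg : Continuous g)
    (hp : Function.Periodic g 1) : Continuous fun x : 𝕋 => g (torusRep x) :=
  (QuotientAddGroup.isOpenQuotientMap_mk (N := AddSubgroup.zmultiples (1 : ℝ))).isQuotientMap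
    |>.continuous_iff.2 <| hg.congr fun x => (apply_torusRep_coe hp x).symm

lemma continuous_deriv_deriv {ψ : ℝ → ℝ} (hψ : ContDiff ℝ 2 ψ) : Continuous (deriv (deriv ψ)) :=
  (contDiff_succ_iff_deriv (n := 1).1 hψ).2.2.continuous_deriv le_rfl

lemma integral_conv_green_mul (a : ℝ) (ν : Measure 𝕋) [IsFiniteMeasure ν] (g L : C(𝕋, ℝ)) :
    ∫ x, conv (green a) ν g x * L x = ∫ y, g y * conv (green a) volume L y ∂ν := by
  let F : C(𝕋 × 𝕋, ℝ) := ⟨fun q => green a (q.1 - q.2) * g q.2 * L q.1, by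
    have := continuous_green a
    fun_prop⟩
  have hint : Integrable (Function.uncurry fun x y => green a (x - y) * g y * L x)
      (volume.prod ν) :=
    F.continuous.integrable_of_hasCompactSupport (.of_compactSpace F)
  simp only [conv, ← integral_mul_const, ← integral_const_mul]
  rw [integral_integral_swap hint]
  congr with y
  congr with x
  rw [← green_neg, neg_sub]
  ring

lemma conv_green_helmholtz {a : ℝ} (ha : 0 < a) {ψ : ℝ → ℝ} (hψ : ContDiff ℝ 2 ψ)
    (hp : Function.Periodic ψ 1) (y : 𝕋) :
    conv (green a) volume
      (fun x => -(2 / a) * deriv (deriv ψ) (torusRep x) + 2 * a * ψ (torusRep x)) y =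
      ψ (torusRep y) := by
  obtain ⟨r, rfl⟩ := QuotientAddGroup.mk_surjective y
  have h := integral_green_mul_helmholtz ha (θ := fun x => ψ (r + x))
    (hψ.comp (contDiff_const.add contDiff_id)) fun x =>
      (congrArg ψ (add_assoc r x 1).symm).trans (hp _)
  have hderiv (f : ℝ → ℝ) : deriv (fun x => f (r + x)) = fun x => deriv f (r + x) :=
    funext fun x => deriv_comp_const_add f r x
  simp only [hderiv, add_zero] at h
  have hmod := UnitAddCircle.intervalIntegral_preimage 0 fun x : 𝕋 => green a x *
    (-(2 / a) * deriv (deriv ψ) (torusRep (r + x)) + 2 * a * ψ (torusRep (r + x)))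
  rw [zero_add] at hmod
  rw [apply_torusRep_coe hp, ← h, conv, ← integral_add_left_eq_self _ (r : 𝕋)]
  simp only [sub_add_cancel_left, green_neg]
  rw [← hmod]
  simp only [← AddCircle.coe_add, apply_torusRep_coe hp,
    apply_torusRep_coe (periodic_deriv (periodic_deriv hp))]

lemma integral_potential_mul_helmholtz {a : ℝ} (ha : 2 ≤ a) (ρ : ProbabilityMeasure 𝕋) {ψ : ℝ → ℝ}
    (hψ : ContDiff ℝ 2 ψ) (hp : Function.Periodic ψ 1) :
    ∫ x, potential a ρ x *
        (-(2 / a) * deriv (deriv ψ) (torusRep x) + 2 * a * ψ (torusRep x)) =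
      (∫ x, smoothSource a ρ x * ψ (torusRep x)) + ∫ x, ψ (torusRep x) ∂(ρ : Measure 𝕋) := by
  let L : C(𝕋, ℝ) := ⟨fun x => -(2 / a) * deriv (deriv ψ) (torusRep x) + 2 * a * ψ (torusRep x),
    ((continuous_comp_torusRep (continuous_deriv_deriv hψ)
      (periodic_deriv (periodic_deriv hp))).const_mul _).add
      ((continuous_comp_torusRep hψ.continuous hp).const_mul _)⟩
  have hint (ν : Measure 𝕋) [IsFiniteMeasure ν] (g : C(𝕋, ℝ)) :
      Integrable (fun x => conv (green a) ν g x * L x) :=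
    integrable_continuousMap volume (greenConv a ν g * L)
  have hfubini (ν : Measure 𝕋) [IsFiniteMeasure ν] (g : C(𝕋, ℝ)) :
      ∫ x, conv (green a) ν g x * L x = ∫ x, g x * ψ (torusRep x) ∂ν := by
    rw [integral_conv_green_mul]
    congr with y
    rw [← conv_green_helmholtz (by linarith) hψ hp y]
    rfl
  calc ∫ x, potential a ρ x * L x
      = ∫ x, (conv (green a) volume (smoothSource a ρ) x * L x +
          conv (green a) ρ (1 : C(𝕋, ℝ)) x * L x) := by
        congr with x
        rw [potential_eq_conv ha, add_mul]
        rfl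
    _ = _ := by
        rw [integral_add (hint _ _) (hint _ _), hfubini, hfubini]
        simp only [ContinuousMap.one_apply, one_mul]

lemma weak_poissonBoltzmann {a : ℝ} (ha : 2 ≤ a) (ρ : ProbabilityMeasure 𝕋) {ψ : ℝ → ℝ}
    (hψ : ContDiff ℝ 2 ψ) (hp : Function.Periodic ψ 1) :
    2 / a * ∫ x in Set.Ico (0 : ℝ) 1, potential a ρ x * deriv (deriv ψ) x =
      (∫ x in Set.Ico (0 : ℝ) 1, exp (potential a ρ x) * ψ x) -
        ∫ x, ψ (torusRep x) ∂(ρ : Measure 𝕋) := by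
  let U := potential a ρ
  let Ψ : C(𝕋, ℝ) := ⟨_, continuous_comp_torusRep hψ.continuous hp⟩
  let Ψ'' : C(𝕋, ℝ) :=
    ⟨_, continuous_comp_torusRep (continuous_deriv_deriv hψ) (periodic_deriv (periodic_deriv hp))⟩
  have hmain : ∫ x, U x * (-(2 / a) * Ψ'' x + 2 * a * Ψ x) = _ :=
    integral_potential_mul_helmholtz ha ρ hψ hp
  have hU'' : ∫ x in Set.Ico (0 : ℝ) 1, U x * deriv (deriv ψ) x = ∫ x, U x * Ψ'' x := by
    rw [← setIntegral_Ico_coe_torus]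
    simp [Ψ'', apply_torusRep_coe (periodic_deriv (periodic_deriv hp))]
  have hexp : ∫ x in Set.Ico (0 : ℝ) 1, exp (U x) * ψ x = ∫ x, exp (U x) * Ψ x := by
    rw [← setIntegral_Ico_coe_torus]
    simp [Ψ, apply_torusRep_coe hp]
  have hsplit : ∀ x, U x * (-(2 / a) * Ψ'' x + 2 * a * Ψ x) =
      -(2 / a) * (U x * Ψ'' x) + (smoothSource a ρ x * Ψ x + exp (U x) * Ψ x) := fun x => by
    rw [smoothSource_apply ha]
    ring
  have hint (g : 𝕋 → ℝ) (hg : Continuous g) : Integrable g volume :=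
    integrable_continuousMap volume ⟨g, hg⟩
  simp only [hsplit] at hmain
  rw [integral_add (hint _ (by fun_prop)) (hint _ (by fun_prop)), integral_const_mul,
    integral_add (hint _ (by fun_prop)) (hint _ (by fun_prop))] at hmain
  rw [hU'', hexp]
  linarith!

/-! ### Integrals of almost everywhere continuous functions -/

/-- The lower Lipschitz regularisation of `g`: for bounded `g`, the largest `n`-Lipschitz function
below `g`. -/
def lipschitzEnvelope {X : Type*} [PseudoMetricSpace X] (g : X → ℝ) (n : ℕ) (x : X) : ℝ :=
  ⨅ y, g y + n * dist x y

section LipschitzEnvelope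

variable {X : Type*} [PseudoMetricSpace X] {g : X → ℝ} {C : ℝ}

lemma bddBelow_lipschitzEnvelope (hC : ∀ x, |g x| ≤ C) (n : ℕ) (x : X) :
    BddBelow (Set.range fun y => g y + n * dist x y) :=
  ⟨-C, Set.forall_mem_range.2 fun y =>
    (neg_le_of_abs_le (hC y)).trans (le_add_of_nonneg_right (by positivity))⟩

lemma lipschitzEnvelope_le (hC : ∀ x, |g x| ≤ C) (n : ℕ) (x : X) :
    lipschitzEnvelope g n x ≤ g x :=
  (ciInf_le (bddBelow_lipschitzEnvelope hC n x) x).trans_eq (by simp)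

lemma abs_lipschitzEnvelope_le (hC : ∀ x, |g x| ≤ C) (n : ℕ) (x : X) :
    |lipschitzEnvelope g n x| ≤ C := by
  have : Nonempty X := ⟨x⟩
  refine abs_le.2 ⟨le_ciInf fun y => ?_, (lipschitzEnvelope_le hC n x).trans (le_of_abs_le (hC x))⟩
  exact (neg_le_of_abs_le (hC y)).trans (le_add_of_nonneg_right (by positivity))

lemma lipschitzWith_lipschitzEnvelope (hC : ∀ x, |g x| ≤ C) (n : ℕ) :
    LipschitzWith n (lipschitzEnvelope g n) := by
  refine LipschitzWith.of_le_add_mul _ fun x y => ?_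
  have : Nonempty X := ⟨x⟩
  rw [← sub_le_iff_le_add]
  refine le_ciInf fun z => sub_le_iff_le_add.2 ?_
  refine (ciInf_le (bddBelow_lipschitzEnvelope hC n x) z).trans ?_
  rw [add_assoc, add_comm (_ * _), NNReal.coe_natCast, ← mul_add]
  gcongr
  exact dist_triangle x y z

lemma tendsto_lipschitzEnvelope (hC : ∀ x, |g x| ≤ C) {x : X} (hx : ContinuousAt g x) :
    Tendsto (fun n => lipschitzEnvelope g n x) atTop (𝓝 (g x)) := by
  have : Nonempty X := ⟨x⟩
  refine tendsto_order.2 ⟨fun c hc => ?_, fun c hc =>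
    Eventually.of_forall fun n => (lipschitzEnvelope_le hC n x).trans_lt hc⟩
  obtain ⟨c', hcc', hc'⟩ := exists_between hc
  obtain ⟨δ, hδ, hball⟩ := Metric.eventually_nhds_iff.1 (hx.eventually (lt_mem_nhds hc'))
  obtain ⟨N, hN⟩ := exists_nat_ge (2 * C / δ)
  filter_upwards [eventually_ge_atTop N] with n hn
  refine hcc'.trans_le (le_ciInf fun y => ?_)
  rcases lt_or_ge (dist y x) δ with hy | hy
  · exact (hball hy).le.trans (le_add_of_nonneg_right (by positivity))
  · have hfar : 2 * C ≤ n * dist x y :=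
      calc 2 * C ≤ N * δ := (div_le_iff₀ hδ).1 hN
        _ ≤ n * dist x y := by
          rw [dist_comm]
          gcongr
    linarith [neg_le_of_abs_le (hC y), le_of_abs_le (hC x)]

end LipschitzEnvelope

lemma integrable_of_abs_le {X : Type*} [MeasurableSpace X] {g : X → ℝ} {C : ℝ} {μ : Measure X}
    [IsFiniteMeasure μ] (hg : Measurable g) (hC : ∀ x, |g x| ≤ C) : Integrable g μ :=
  .of_bound hg.aestronglyMeasurable C (Eventually.of_forall hC)

section AEContinuous

variable {X : Type*} [PseudoMetricSpace X] [MeasurableSpace X] [OpensMeasurableSpace X]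
  {g : X → ℝ} {C : ℝ}

lemma eventually_lt_integral_of_ae_continuousAt (hg : Measurable g) (hC : ∀ x, |g x| ≤ C)
    {μ : ProbabilityMeasure X} (hμ : ∀ᵐ x ∂(μ : Measure X), ContinuousAt g x) {c : ℝ}
    (hc : c < ∫ x, g x ∂(μ : Measure X)) :
    ∀ᶠ ν : ProbabilityMeasure X in 𝓝 μ, c < ∫ x, g x ∂(ν : Measure X) := by
  let F (n : ℕ) : BoundedContinuousFunction X ℝ := .ofNormedAddCommGroup
    (lipschitzEnvelope g n) (lipschitzWith_lipschitzEnvelope hC n).continuous C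
    (abs_lipschitzEnvelope_le hC n)
  have happrox : Tendsto (fun n => ∫ x, F n x ∂(μ : Measure X)) atTop
      (𝓝 (∫ x, g x ∂(μ : Measure X))) :=
    tendsto_integral_of_dominated_convergence (fun _ => C)
      (fun n => (F n).continuous.measurable.aestronglyMeasurable) (integrable_const C)
      (fun n => Eventually.of_forall (abs_lipschitzEnvelope_le hC n))
      (hμ.mono fun x hx => tendsto_lipschitzEnvelope hC hx)
  obtain ⟨n, hn⟩ := (happrox.eventually (lt_mem_nhds hc)).exists
  filter_upwards [(ProbabilityMeasure.continuous_integral_boundedContinuousFunction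
    (f := F n)).continuousAt.eventually (lt_mem_nhds hn)] with ν hν
  exact hν.trans_le (integral_mono ((F n).integrable _) (integrable_of_abs_le hg hC)
    (lipschitzEnvelope_le hC n))

theorem continuousAt_integral_of_ae_continuousAt (hg : Measurable g) (hC : ∀ x, |g x| ≤ C)
    {μ : ProbabilityMeasure X} (hμ : ∀ᵐ x ∂(μ : Measure X), ContinuousAt g x) :
    ContinuousAt (fun ν : ProbabilityMeasure X => ∫ x, g x ∂(ν : Measure X)) μ := by
  refine tendsto_order.2 ⟨fun c hc => eventually_lt_integral_of_ae_continuousAt hg hC hμ hc,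
    fun c hc => ?_⟩
  have hneg := eventually_lt_integral_of_ae_continuousAt (g := -g) (c := -c) hg.neg
    (fun x => (abs_neg (g x)).trans_le (hC x)) (hμ.mono fun x hx => hx.neg)
    (by simpa [integral_neg] using hc)
  exact hneg.mono fun ν hν => by simpa [integral_neg] using hν

end AEContinuous

/-! ### Continuity of the force term at measures with monokinetic atoms -/

/-- The phase space of positions and velocities. -/
abbrev Phase := 𝕋 × ℝ

/-- The spatial density of a distribution of particles. -/
def density (μ : ProbabilityMeasure Phase) : ProbabilityMeasure 𝕋 :=
  μ.map measurable_fst.aemeasurable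

/-- Almost surely, no two independent particles sit at the same place with different velocities:
all particles in an atom of the density have the same velocity. -/
def HasMonokineticAtoms (μ : Measure Phase) : Prop :=
  ∀ᵐ z ∂μ.prod μ, z.1.1 = z.2.1 → z.1.2 = z.2.2

lemma integral_density (μ : ProbabilityMeasure Phase) {g : 𝕋 → ℝ} (hg : Measurable g) :
    ∫ x, g x ∂(density μ : Measure 𝕋) = ∫ p, g p.1 ∂(μ : Measure Phase) :=
  integral_map measurable_fst.aemeasurable hg.aestronglyMeasurable

lemma continuous_density : Continuous density :=
  ProbabilityMeasure.continuous_map continuous_fst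

section OddKernel

variable {k : 𝕋 → ℝ} {A : ℝ} {ψ : BoundedContinuousFunction Phase ℝ}

lemma continuousAt_kernel_mul_sub (hk : ∀ x ≠ 0, ContinuousAt k x) (hA : ∀ x, |k x| ≤ A)
    (ψ : BoundedContinuousFunction Phase ℝ) {z : Phase × Phase}
    (hz : z.1.1 = z.2.1 → z.1.2 = z.2.2) :
    ContinuousAt (fun z : Phase × Phase => k (z.1.1 - z.2.1) * (ψ z.1 - ψ z.2)) z := by
  have hψ : Continuous fun z : Phase × Phase => ψ z.1 - ψ z.2 := by fun_prop
  by_cases hx : z.1.1 = z.2.1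
  · have hzero : ψ z.1 - ψ z.2 = 0 := by rw [Prod.ext hx (hz hx), sub_self]
    rw [ContinuousAt, hzero, mul_zero]
    have hlim := (hψ.norm.const_mul A).tendsto' z 0 (by simp [hzero])
    refine squeeze_zero_norm (fun w => ?_) hlim
    rw [norm_mul]
    exact mul_le_mul_of_nonneg_right (hA _) (norm_nonneg _)
  · have hsub : ContinuousAt (fun z : Phase × Phase => z.1.1 - z.2.1) z := by fun_prop
    exact (ContinuousAt.comp_of_eq (hk _ (sub_ne_zero.2 hx)) hsub rfl).mul hψ.continuousAt

lemma abs_kernel_mul_sub_le (hA : ∀ x, |k x| ≤ A) (ψ : BoundedContinuousFunction Phase ℝ)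
    (z : Phase × Phase) : |k (z.1.1 - z.2.1) * (ψ z.1 - ψ z.2)| ≤ A * (2 * ‖ψ‖) := by
  rw [abs_mul, ← Real.dist_eq (ψ z.1)]
  exact mul_le_mul (hA _) (ψ.dist_le_two_norm _ _) dist_nonneg ((abs_nonneg _).trans (hA 0))

/- Exchanging the two particles turns the singular kernel into one that vanishes on the diagonal
of phase space. -/
lemma integral_conv_density_mul (hk : Measurable k) (hA : ∀ x, |k x| ≤ A)
    (hodd : ∀ x, k (-x) = -k x) (ψ : BoundedContinuousFunction Phase ℝ)
    (μ : ProbabilityMeasure Phase) :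
    ∫ p, conv k (density μ) 1 p.1 * ψ p ∂(μ : Measure Phase) =
      2⁻¹ * ∫ z, k (z.1.1 - z.2.1) * (ψ z.1 - ψ z.2) ∂(μ.prod μ : Measure (Phase × Phase)) := by
  rw [ProbabilityMeasure.toMeasure_prod]
  have hint {w : Phase × Phase → Phase} (hw : Measurable w) :
      Integrable (fun z : Phase × Phase => k (z.1.1 - z.2.1) * ψ (w z))
        ((μ : Measure Phase).prod μ) := by
    have := ψ.continuous.measurable
    refine integrable_of_abs_le (C := A * ‖ψ‖) (by fun_prop) fun z => ?_
    rw [abs_mul]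
    exact mul_le_mul (hA _) (ψ.norm_coe_le_norm _) (abs_nonneg _) ((abs_nonneg _).trans (hA 0))
  have hdouble : ∫ p, conv k (density μ) 1 p.1 * ψ p ∂(μ : Measure Phase) =
      ∫ z : Phase × Phase, k (z.1.1 - z.2.1) * ψ z.1 ∂(μ : Measure Phase).prod μ := by
    rw [integral_prod _ (hint measurable_fst)]
    congr with p
    simp only [conv, Pi.one_apply, mul_one]
    rw [integral_density μ (g := fun y => k (p.1 - y)) (by fun_prop), integral_mul_const]
  have hswap : ∫ z : Phase × Phase, k (z.1.1 - z.2.1) * ψ z.2 ∂(μ : Measure Phase).prod μ =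
      -∫ z : Phase × Phase, k (z.1.1 - z.2.1) * ψ z.1 ∂(μ : Measure Phase).prod μ := by
    rw [← integral_prod_swap, ← integral_neg]
    congr with z
    rw [Prod.fst_swap, Prod.snd_swap, ← neg_sub, hodd, neg_mul]
  simp only [mul_sub]
  rw [integral_sub (hint measurable_fst) (hint measurable_snd), hswap, hdouble]
  ring

lemma continuousAt_integral_conv_density_mul (hk : Measurable k) (hk₀ : ∀ x ≠ 0, ContinuousAt k x)
    (hA : ∀ x, |k x| ≤ A) (hodd : ∀ x, k (-x) = -k x) (ψ : BoundedContinuousFunction Phase ℝ)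
    {f : ProbabilityMeasure Phase} (hf : HasMonokineticAtoms (f : Measure Phase)) :
    ContinuousAt (fun μ : ProbabilityMeasure Phase =>
      ∫ p, conv k (density μ) 1 p.1 * ψ p ∂(μ : Measure Phase)) f := by
  have := ψ.continuous.measurable
  have hprod : Continuous fun μ : ProbabilityMeasure Phase => μ.prod μ := by fun_prop
  simp only [integral_conv_density_mul hk hA hodd]
  have hcont := continuousAt_integral_of_ae_continuousAt (μ := f.prod f) (by fun_prop)
    (abs_kernel_mul_sub_le hA ψ)
    (by
      rw [ProbabilityMeasure.toMeasure_prod]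
      exact hf.mono fun z hz => continuousAt_kernel_mul_sub hk₀ hA ψ hz)
  exact (hcont.comp_of_eq hprod.continuousAt rfl).const_mul _

end OddKernel

lemma continuous_integral_greenForceConv_mul {a : ℝ} (ha : 2 ≤ a)
    (ψ : BoundedContinuousFunction Phase ℝ) :
    Continuous fun μ : ProbabilityMeasure Phase =>
      ∫ p, conv (greenForce a) volume (smoothSource a (density μ)) p.1 * ψ p
        ∂(μ : Measure Phase) := by
  have ha0 : 0 < a := by linarith
  let F (μ : ProbabilityMeasure Phase) : BoundedContinuousFunction Phase ℝ :=
    (BoundedContinuousFunction.mkOfCompact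
      (greenForceConv ha0 (smoothSource a (density μ)))).compContinuous .fst * ψ
  have hF : Continuous F :=
    ((BoundedContinuousFunction.continuous_compContinuous _).comp <|
      (ContinuousMap.isometryEquivBoundedOfCompact 𝕋 ℝ).continuous.comp <|
        (lipschitzWith_greenForceConv ha0).continuous.comp <|
          (continuous_smoothSource ha).comp continuous_density).mul continuous_const
  exact continuous_integral_boundedContinuousFunction_prod.comp (hF.prodMk continuous_id)

theorem continuousAt_integral_electricField_mul {a : ℝ} (ha : 2 ≤ a)
    (ψ : BoundedContinuousFunction Phase ℝ) {f : ProbabilityMeasure Phase}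
    (hf : HasMonokineticAtoms (f : Measure Phase)) :
    ContinuousAt (fun μ : ProbabilityMeasure Phase =>
      ∫ p, electricField a (density μ) p.1 * ψ p ∂(μ : Measure Phase)) f := by
  have ha0 : 0 < a := by linarith
  have hforce := abs_greenForce_le ha0
  have hsplit (μ : ProbabilityMeasure Phase) :
      ∫ p, electricField a (density μ) p.1 * ψ p ∂(μ : Measure Phase) =
        (∫ p, conv (greenForce a) volume (smoothSource a (density μ)) p.1 * ψ p
            ∂(μ : Measure Phase)) +
          ∫ p, conv (greenForce a) (density μ) 1 p.1 * ψ p ∂(μ : Measure Phase) := by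
    have hint (ν : Measure 𝕋) [IsProbabilityMeasure ν] (g : C(𝕋, ℝ)) :
        Integrable (fun p : Phase => conv (greenForce a) ν g p.1 * ψ p) (μ : Measure Phase) := by
      refine (ψ.integrable _).bdd_mul (c := a / 4 * ‖g‖)
        ((measurable_conv (measurable_greenForce a) g.continuous.measurable).comp
          measurable_fst).aestronglyMeasurable
        (Eventually.of_forall fun p => abs_conv_le hforce g.norm_coe_le_norm _)
    rw [← ContinuousMap.coe_one, ← integral_add (hint _ _) (hint _ 1)]
    congr with p
    exact add_mul _ _ _
  simp only [hsplit]
  exact (continuous_integral_greenForceConv_mul ha ψ).continuousAt.add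
    (continuousAt_integral_conv_density_mul (measurable_greenForce a)
      (fun x hx => continuousAt_greenForce a hx) hforce (greenForce_neg a) ψ hf)

/-! ### Phase-space trajectories with Lipschitz velocity -/

instance : MeasurableSpace C(ℝ, ℝ) := borel _

instance : BorelSpace C(ℝ, ℝ) := ⟨rfl⟩

/-- The `M`-Lipschitz real functions of time, with the topology of locally uniform convergence. -/
abbrev LipschitzPath (M : NNReal) : Type := {v : C(ℝ, ℝ) // LipschitzWith M v}

instance (M : NNReal) : SecondCountableTopology (LipschitzPath M) :=
  TopologicalSpace.Subtype.secondCountableTopology _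

instance (M : NNReal) : TopologicalSpace.MetrizableSpace (LipschitzPath M) :=
  Topology.IsEmbedding.subtypeVal.metrizableSpace

/-- The trajectories of particles on the torus with acceleration at most `M`, encoded by the
position at time `0` and the velocity, which is prescribed at negative times as well. -/
abbrev Trajectory (M : NNReal) : Type := 𝕋 × LipschitzPath M

lemma abs_le_of_lipschitzWith {M : NNReal} {v : ℝ → ℝ} (hv : LipschitzWith M v) (t : ℝ) :
    |v t| ≤ |v 0| + M * |t| := by
  have h := hv.dist_le_mul t 0
  rw [Real.dist_eq, dist_zero_right, Real.norm_eq_abs] at h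
  linarith [abs_sub_abs_le_abs_sub (v t) (v 0)]

namespace Trajectory

variable {M : NNReal}

/-- The phase-space point occupied by a trajectory at time `t`. -/
def state (γ : Trajectory M) (t : ℝ) : Phase :=
  (γ.1 + (∫ s in (0 : ℝ)..t, γ.2.1 s : ℝ), γ.2.1 t)

lemma continuous_uncurry_state : Continuous fun z : Trajectory M × ℝ => z.1.state z.2 := by
  have : Continuous fun z : Trajectory M × ℝ => ∫ s in (0 : ℝ)..z.2, z.1.2.1 s :=
    intervalIntegral.continuous_parametric_intervalIntegral_of_continuous
      (f := fun (z : Trajectory M × ℝ) s => z.1.2.1 s) (by fun_prop) continuous_snd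
  unfold state
  fun_prop

lemma continuous_state_apply (t : ℝ) : Continuous fun γ : Trajectory M => γ.state t :=
  continuous_uncurry_state.comp (by fun_prop : Continuous fun γ => (γ, t))

lemma state_zero (γ : Trajectory M) : γ.state 0 = (γ.1, γ.2.1 0) := by
  simp [state]

lemma abs_state_snd_le (γ : Trajectory M) (t : ℝ) :
    |(γ.state t).2| ≤ |(γ.state 0).2| + M * |t| :=
  abs_le_of_lipschitzWith γ.2.2 t

lemma isCompact_setOf_abs_state_zero_le (M : NNReal) (R : ℝ) :
    IsCompact {γ : Trajectory M | |(γ.state 0).2| ≤ R} := by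
  let S : Set C(ℝ, ℝ) := {v | LipschitzWith M v ∧ |v 0| ≤ R}
  have hS : IsCompact S := by
    refine ArzelaAscoli.isCompact_of_equicontinuous S ?_
      (LipschitzWith.uniformEquicontinuous _ M fun v => v.2.1).equicontinuous
    have himage : ContinuousMap.toFun '' S = {v : ℝ → ℝ | LipschitzWith M v ∧ |v 0| ≤ R} :=
      Set.Subset.antisymm (by rintro _ ⟨v, hv, rfl⟩; exact hv)
        fun v hv => ⟨⟨v, hv.1.continuous⟩, hv, rfl⟩
    rw [himage]
    refine (isCompact_univ_pi fun t => isCompact_Icc (a := -(R + M * |t|)) (b := R + M * |t|))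
      |>.of_isClosed_subset ?_ fun v hv t _ => ?_
    · exact (isClosed_setOfPred_lipschitzWith M).inter
        (isClosed_le (by fun_prop : Continuous fun v : ℝ → ℝ => |v 0|) continuous_const)
    · exact abs_le.1 ((abs_le_of_lipschitzWith hv.1 t).trans (by gcongr; exact hv.2))
  have hpreimage : IsCompact (((↑) : LipschitzPath M → C(ℝ, ℝ)) ⁻¹' S) :=
    (Topology.IsInducing.subtypeVal.isCompact_preimage_iff
      fun v hv => ⟨⟨v, hv.1⟩, rfl⟩).2 hS
  convert (isCompact_univ (X := 𝕋)).prod hpreimage using 1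
  ext γ
  simp [S, state_zero, γ.2.2]

end Trajectory

lemma ae_deriv_eq_zero_of_coe_torus_eq_zero {D D' : ℝ → ℝ} (hD : ∀ t, HasDerivAt D (D' t) t) :
    ∀ᵐ t, (D t : 𝕋) = 0 → D' t = 0 := by
  refine measure_null_of_locally_null _ fun t ht => ⟨{t}, ?_, measure_singleton t⟩
  obtain ⟨hDt, hne⟩ := Classical.not_imp.1 ht
  obtain ⟨m, hm⟩ := AddCircle.coe_eq_zero_iff _ |>.1 hDt
  have hclose : ∀ᶠ s in 𝓝[≠] t, |D s - D t| < 1 := by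
    refine nhdsWithin_le_nhds ?_
    exact (hD t).continuousAt.eventually (eventually_abs_sub_lt (D t) one_pos)
  rw [mem_nhdsWithin_iff_eventually]
  filter_upwards [eventually_nhdsWithin_iff.1 (((hD t).eventually_ne (c := D t) hne).and hclose)]
    with s hs hsS
  by_contra hst
  obtain ⟨hsne, hlt⟩ := hs hst
  obtain ⟨n, hn⟩ := AddCircle.coe_eq_zero_iff _ |>.1 (Classical.not_imp.1 hsS).1
  simp only [zsmul_eq_mul, mul_one] at hm hn
  rw [← hm, ← hn] at hlt hsne
  have : n - m = 0 := Int.abs_lt_one_iff.1 (by exact_mod_cast hlt)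
  exact hsne (by rw [sub_eq_zero.1 this])

section Marginal

variable {M : NNReal}

/-- The law at time `t` of a random trajectory with law `P`. -/
def marginal (P : ProbabilityMeasure (Trajectory M)) (t : ℝ) : ProbabilityMeasure Phase :=
  P.map (Trajectory.continuous_state_apply t).aemeasurable

lemma integral_marginal (P : ProbabilityMeasure (Trajectory M)) (t : ℝ) {g : Phase → ℝ}
    (hg : Measurable g) :
    ∫ p, g p ∂(marginal P t : Measure Phase) =
      ∫ γ, g (γ.state t) ∂(P : Measure (Trajectory M)) := by
  rw [marginal, ProbabilityMeasure.toMeasure_map, integral_map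
    (Trajectory.continuous_state_apply t).aemeasurable hg.aestronglyMeasurable]

lemma continuous_marginal :
    Continuous fun z : ProbabilityMeasure (Trajectory M) × ℝ => marginal z.1 z.2 := by
  have hprod : Continuous fun z : ProbabilityMeasure (Trajectory M) × ℝ =>
      z.1.prod (diracProba z.2) := by
    have := continuous_diracProba (X := ℝ)
    fun_prop
  convert (ProbabilityMeasure.continuous_map Trajectory.continuous_uncurry_state).comp hprod with z
  refine ProbabilityMeasure.toMeasure_injective ?_
  calc
    (marginal z.1 z.2 : Measure Phase) =
        ((z.1 : Measure (Trajectory M)).map fun γ => (γ, z.2)).map fun w => w.1.state w.2 := by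
      rw [Measure.map_map Trajectory.continuous_uncurry_state.measurable (by fun_prop)]
      rfl
    _ = ((z.1 : Measure (Trajectory M)).prod (Measure.dirac z.2)).map fun w => w.1.state w.2 := by
      rw [Measure.prod_dirac]

lemma tendsto_marginal {ι : Type*} {l : Filter ι} {Q : ι → ProbabilityMeasure (Trajectory M)}
    {s : ι → ℝ} {P : ProbabilityMeasure (Trajectory M)} {t : ℝ} (hQ : Tendsto Q l (𝓝 P))
    (hs : Tendsto s l (𝓝 t)) : Tendsto (fun i => marginal (Q i) (s i)) l (𝓝 (marginal P t)) := by
  have hcomp := (continuous_marginal.tendsto (P, t)).comp (hQ.prodMk_nhds hs)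
  exact hcomp

lemma ae_state_monokinetic (γ γ' : Trajectory M) :
    ∀ᵐ t, (γ.state t).1 = (γ'.state t).1 → (γ.state t).2 = (γ'.state t).2 := by
  have hderiv (t : ℝ) : HasDerivAt (fun t => (torusRep γ.1 + ∫ s in (0 : ℝ)..t, γ.2.1 s) -
      (torusRep γ'.1 + ∫ s in (0 : ℝ)..t, γ'.2.1 s)) (γ.2.1 t - γ'.2.1 t) t :=
    ((γ.2.1.continuous.integral_hasStrictDerivAt 0 t).hasDerivAt.const_add _).sub
      ((γ'.2.1.continuous.integral_hasStrictDerivAt 0 t).hasDerivAt.const_add _)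
  filter_upwards [ae_deriv_eq_zero_of_coe_torus_eq_zero hderiv] with t ht heq
  refine sub_eq_zero.1 (ht ?_)
  rw [AddCircle.coe_sub, AddCircle.coe_add, AddCircle.coe_add, coe_torusRep, coe_torusRep]
  exact sub_eq_zero.2 heq

lemma ae_hasMonokineticAtoms_marginal (P : ProbabilityMeasure (Trajectory M)) :
    ∀ᵐ t, HasMonokineticAtoms (marginal P t : Measure Phase) := by
  have hmeas : MeasurableSet {z : Phase × Phase | z.1.1 = z.2.1 → z.1.2 = z.2.2} :=
    (measurableSet_eq_fun (by fun_prop) (by fun_prop)).imp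
      (measurableSet_eq_fun (by fun_prop) (by fun_prop))
  have hstate : Continuous fun y : (Trajectory M × Trajectory M) × ℝ =>
      (y.1.1.state y.2, y.1.2.state y.2) :=
    (Trajectory.continuous_uncurry_state.comp
      ((continuous_fst.comp continuous_fst).prodMk continuous_snd)).prodMk
      (Trajectory.continuous_uncurry_state.comp
        ((continuous_snd.comp continuous_fst).prodMk continuous_snd))
  have hae := (Measure.ae_ae_comm (μ := (P : Measure (Trajectory M)).prod P) (ν := volume)
    (p := fun (w : Trajectory M × Trajectory M) t =>
      (w.1.state t).1 = (w.2.state t).1 → (w.1.state t).2 = (w.2.state t).2)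
    (hstate.measurable hmeas)).1 (Eventually.of_forall fun w => ae_state_monokinetic w.1 w.2)
  filter_upwards [hae] with t ht
  have ht' := (Trajectory.continuous_state_apply (M := M) t).measurable
  rw [HasMonokineticAtoms, marginal, ProbabilityMeasure.toMeasure_map,
    Measure.map_prod_map _ _ ht' ht', ae_map_iff (ht'.prodMap ht').aemeasurable hmeas]
  exact ht

lemma isCompact_closure_setOf_marginal_zero_eq (f₀ : ProbabilityMeasure Phase) :
    IsCompact (closure {P : ProbabilityMeasure (Trajectory M) | marginal P 0 = f₀}) := by
  refine isCompact_closure_of_isTightMeasureSet <|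
    isTightMeasureSet_iff_exists_isCompact_measure_compl_le.2 fun δ hδ => ?_
  obtain ⟨K, hK, hKδ⟩ := isTightMeasureSet_iff_exists_isCompact_measure_compl_le.1
    (isTightMeasureSet_singleton (μ := (f₀ : Measure Phase))) δ hδ
  obtain ⟨R, hR⟩ := hK.exists_bound_of_continuousOn (f := Prod.snd) continuousOn_snd
  refine ⟨_, Trajectory.isCompact_setOf_abs_state_zero_le M R, ?_⟩
  rintro _ ⟨P, hP, rfl⟩
  calc
    (P : Measure (Trajectory M)) {γ | |(γ.state 0).2| ≤ R}ᶜ ≤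
        (P : Measure (Trajectory M)) ((fun γ => γ.state 0) ⁻¹' Kᶜ) :=
      measure_mono fun γ hγ hmem => hγ (hR _ hmem)
    _ = (marginal P 0 : Measure Phase) Kᶜ :=
      (Measure.map_apply (Trajectory.continuous_state_apply 0).measurable
        hK.measurableSet.compl).symm
    _ = (f₀ : Measure Phase) Kᶜ := by rw [hP]
    _ ≤ δ := hKδ _ rfl

lemma integrable_abs_snd_marginal {P : ProbabilityMeasure (Trajectory M)}
    (hP : Integrable (fun p : Phase => |p.2|) (marginal P 0 : Measure Phase)) (t : ℝ) :
    Integrable (fun p : Phase => |p.2|) (marginal P t : Measure Phase) := by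
  have hmeas : Measurable fun p : Phase => |p.2| := by fun_prop
  have hiff (s : ℝ) : Integrable (fun p : Phase => |p.2|) (marginal P s : Measure Phase) ↔
      Integrable (fun γ => |(γ.state s).2|) (P : Measure (Trajectory M)) :=
    integrable_map_measure hmeas.aestronglyMeasurable
      (Trajectory.continuous_state_apply s).aemeasurable
  rw [hiff] at hP ⊢
  refine (hP.add (integrable_const (M * |t|))).mono'
    ((Trajectory.continuous_state_apply t).snd.abs).aestronglyMeasurable
    (Eventually.of_forall fun γ => ?_)
  simpa using γ.abs_state_snd_le t

end Marginal

/-! ### Test functions along uniformly accelerated motion -/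

section TestFun

variable {φ : ℝ × ℝ → ℝ}

lemma fderiv_add_one_fst (hp : ∀ q : ℝ × ℝ, φ (q.1 + 1, q.2) = φ q) (q : ℝ × ℝ) :
    fderiv ℝ φ (q.1 + 1, q.2) = fderiv ℝ φ q := by
  have h := fderiv_comp_add_right (𝕜 := ℝ) (f := φ) (x := q) (1, 0)
  have hshift : (fun q => φ (q + (1, 0))) = φ := funext fun q => by
    simpa [Prod.add_def] using hp q
  rw [hshift] at h
  simpa [Prod.add_def] using h.symm

lemma fderiv_eq_zero_of_eq_zero_of_le_abs_snd {R : ℝ} (hR : ∀ q : ℝ × ℝ, R ≤ |q.2| → φ q = 0)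
    {q : ℝ × ℝ} (hq : R + 1 ≤ |q.2|) : fderiv ℝ φ q = 0 := by
  have hopen : IsOpen {q : ℝ × ℝ | R < |q.2|} := isOpen_lt continuous_const (by fun_prop)
  have hzero : φ =ᶠ[𝓝 q] 0 := by
    filter_upwards [hopen.mem_nhds (show R < |q.2| by linarith)] with z hz
    exact hR z (le_of_lt hz)
  rw [hzero.fderiv_eq, fderiv_zero, Pi.zero_apply]

/-- The transport term `v ∂ₓφ` of the Vlasov operator. -/
def transport (φ : ℝ × ℝ → ℝ) (q : ℝ × ℝ) : ℝ := q.2 * fderiv ℝ φ q (1, 0)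

/-- The velocity derivative `∂ᵥφ`, which the force multiplies in the Vlasov operator. -/
def velocityDeriv (φ : ℝ × ℝ → ℝ) (q : ℝ × ℝ) : ℝ := fderiv ℝ φ q (0, 1)

lemma testFun_transport (hφ : TestFun φ) : TestFun (transport φ) := by
  obtain ⟨hsmooth, hper, R, hR⟩ := hφ
  refine ⟨contDiff_snd.mul ((hsmooth.fderiv_right (by simp)).clm_apply contDiff_const),
    fun q => ?_, R + 1, fun q hq => ?_⟩
  · simp only [transport, fderiv_add_one_fst hper]
  · simp [transport, fderiv_eq_zero_of_eq_zero_of_le_abs_snd hR hq]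

lemma testFun_velocityDeriv (hφ : TestFun φ) : TestFun (velocityDeriv φ) := by
  obtain ⟨hsmooth, hper, R, hR⟩ := hφ
  refine ⟨(hsmooth.fderiv_right (by simp)).clm_apply contDiff_const,
    fun q => ?_, R + 1, fun q hq => ?_⟩
  · simp only [velocityDeriv, fderiv_add_one_fst hper]
  · simp [velocityDeriv, fderiv_eq_zero_of_eq_zero_of_le_abs_snd hR hq]

/-- The function on `𝕋 × ℝ` represented by a function on `ℝ × ℝ` that is periodic in the first
variable. -/
def descend (φ : ℝ × ℝ → ℝ) (p : Phase) : ℝ := φ (torusRep p.1, p.2)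

lemma descend_coe (hφ : TestFun φ) (x v : ℝ) : descend φ (x, v) = φ (x, v) :=
  apply_torusRep_coe (g := fun x => φ (x, v)) (fun x => hφ.2.1 (x, v)) x

lemma continuous_descend (hφ : TestFun φ) : Continuous (descend φ) := by
  have hquot : IsOpenQuotientMap (Prod.map ((↑) : ℝ → 𝕋) (id : ℝ → ℝ)) :=
    QuotientAddGroup.isOpenQuotientMap_mk.prodMap .id
  rw [hquot.isQuotientMap.continuous_iff]
  exact hφ.1.continuous.congr fun q => (descend_coe hφ q.1 q.2).symm

lemma measurable_descend (hφ : TestFun φ) : Measurable (descend φ) :=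
  (continuous_descend hφ).measurable

lemma exists_abs_descend_le (hφ : TestFun φ) : ∃ C, ∀ p, |descend φ p| ≤ C := by
  obtain ⟨R, hR⟩ := hφ.2.2
  obtain ⟨C, hC⟩ := (isCompact_univ.prod (isCompact_Icc (a := -R) (b := R)))
    |>.exists_bound_of_continuousOn (continuous_descend hφ).continuousOn
  refine ⟨max C 0, fun p => ?_⟩
  rcases le_total R |p.2| with h | h
  · simp [descend, hR (torusRep p.1, p.2) h]
  · exact (hC p ⟨Set.mem_univ _, abs_le.1 h⟩).trans (le_max_left _ _)

/-- A test function as a bounded continuous function on `𝕋 × ℝ`. -/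
def descendBounded (hφ : TestFun φ) : BoundedContinuousFunction Phase ℝ :=
  .ofNormedAddCommGroup (descend φ) (continuous_descend hφ) _
    (exists_abs_descend_le hφ).choose_spec

/-- The motion with constant acceleration `a` on the phase space `𝕋 × ℝ`. -/
def accelerate (a t : ℝ) (p : Phase) : Phase :=
  (p.1 + (t * p.2 + t ^ 2 / 2 * a : ℝ), p.2 + t * a)

lemma hasDerivAt_descend_accelerate (hφ : TestFun φ) (a t : ℝ) (p : Phase) :
    HasDerivAt (fun t => descend φ (accelerate a t p))
      (descend (transport φ) (accelerate a t p) +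
        a * descend (velocityDeriv φ) (accelerate a t p)) t := by
  obtain ⟨y, v⟩ := p
  obtain ⟨x, rfl⟩ : ∃ x : ℝ, (x : 𝕋) = y := ⟨torusRep y, coe_torusRep y⟩
  have hcurve : HasDerivAt (fun t => (x + (t * v + t ^ 2 / 2 * a), v + t * a))
      (v + t * a, a) t := by
    refine HasDerivAt.prodMk ?_ ?_
    · convert (((hasDerivAt_id' t).mul_const v).fun_add
        ((((hasDerivAt_id' t).fun_pow 2).div_const 2).mul_const a)).const_add x using 1
      norm_num
    · simpa using ((hasDerivAt_id' t).mul_const a).const_add v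
  have hφ' := (hφ.1.differentiable (by simp) _).hasFDerivAt.comp_hasDerivAt t hcurve
  have hlift (ψ : ℝ × ℝ → ℝ) (hψ : TestFun ψ) (s : ℝ) : descend ψ (accelerate a s ((x : 𝕋), v)) =
      ψ (x + (s * v + s ^ 2 / 2 * a), v + s * a) := by
    rw [accelerate, ← AddCircle.coe_add, descend_coe hψ]
  have hsplit : (v + t * a, a) = (v + t * a) • ((1 : ℝ), (0 : ℝ)) + a • ((0 : ℝ), (1 : ℝ)) := by
    simp
  rw [hsplit, map_add, map_smul, map_smul] at hφ'
  rw [hlift _ (testFun_transport hφ), hlift _ (testFun_velocityDeriv hφ), funext (hlift φ hφ)]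
  exact hφ'

lemma accelerate_zero (a : ℝ) (p : Phase) : accelerate a 0 p = p := by
  simp [accelerate]

lemma exists_abs_descend_accelerate_sub_le (hφ : TestFun φ) (M : ℝ) :
    ∃ C, ∀ a, |a| ≤ M → ∀ t p, |descend φ (accelerate a t p) - descend φ p| ≤ C * |t| := by
  obtain ⟨C₁, hC₁⟩ := exists_abs_descend_le (testFun_transport hφ)
  obtain ⟨C₂, hC₂⟩ := exists_abs_descend_le (testFun_velocityDeriv hφ)
  refine ⟨C₁ + M * C₂, fun a ha t p => ?_⟩
  have h := convex_univ.norm_image_sub_le_of_norm_hasDerivWithin_le (x := 0) (y := t)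
    (fun s _ => (hasDerivAt_descend_accelerate hφ a s p).hasDerivWithinAt)
    (C := C₁ + M * C₂) (fun s _ => ?_) (Set.mem_univ _) (Set.mem_univ _)
  · simpa [accelerate_zero] using h
  · refine (abs_add_le _ _).trans (add_le_add (hC₁ _) ?_)
    rw [abs_mul]
    exact mul_le_mul ha (hC₂ _) (abs_nonneg _) ((abs_nonneg a).trans ha)

lemma exists_abs_descend_accelerate_sub_sub_le (hφ : TestFun φ) (M : ℝ) :
    ∃ C, ∀ a, |a| ≤ M → ∀ t, 0 ≤ t → ∀ p,
      |descend φ (accelerate a t p) - descend φ p -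
        t * (descend (transport φ) p + a * descend (velocityDeriv φ) p)| ≤ C * t ^ 2 := by
  obtain ⟨C₁, hC₁⟩ := exists_abs_descend_accelerate_sub_le (testFun_transport hφ) M
  obtain ⟨C₂, hC₂⟩ := exists_abs_descend_accelerate_sub_le (testFun_velocityDeriv hφ) M
  refine ⟨C₁ + M * C₂, fun a ha t ht p => ?_⟩
  let D : ℝ := descend (transport φ) p + a * descend (velocityDeriv φ) p
  have hderiv (s : ℝ) := (hasDerivAt_descend_accelerate hφ a s p).sub
    ((hasDerivAt_id s).mul_const D)
  have hM : 0 ≤ M := (abs_nonneg a).trans ha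
  have hbound (s : ℝ) (hs : s ∈ Set.Icc 0 t) :
      ‖descend (transport φ) (accelerate a s p) +
        a * descend (velocityDeriv φ) (accelerate a s p) - 1 * D‖ ≤ (C₁ + M * C₂) * t := by
    calc
      _ = |(descend (transport φ) (accelerate a s p) - descend (transport φ) p) +
          a * (descend (velocityDeriv φ) (accelerate a s p) - descend (velocityDeriv φ) p)| := by
        rw [Real.norm_eq_abs]; congr 1; simp only [D]; ring
      _ ≤ C₁ * |s| + M * (C₂ * |s|) := by
        refine (abs_add_le _ _).trans (add_le_add (hC₁ a ha s p) ?_)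
        rw [abs_mul]
        exact mul_le_mul ha (hC₂ a ha s p) (abs_nonneg _) hM
      _ ≤ (C₁ + M * C₂) * t := by
        have hC₁' : 0 ≤ C₁ := by simpa using (abs_nonneg _).trans (hC₁ a ha 1 p)
        have hC₂' : 0 ≤ C₂ := by simpa using (abs_nonneg _).trans (hC₂ a ha 1 p)
        rw [abs_of_nonneg hs.1, ← mul_assoc, ← add_mul]
        exact mul_le_mul_of_nonneg_left hs.2 (by positivity)
  have h := (convex_Icc 0 t).norm_image_sub_le_of_norm_hasDerivWithin_le
    (fun s _ => (hderiv s).hasDerivWithinAt) hbound (Set.left_mem_Icc.2 ht)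
    (Set.right_mem_Icc.2 ht)
  simpa [accelerate_zero, abs_of_nonneg ht, sub_right_comm, D, sq, mul_assoc] using h

end TestFun

/-! ### The Euler scheme for mean-field forces -/

lemma abs_min_sub_min_add_abs_max_sub_max (s t t₀ : ℝ) :
    |min s t₀ - min t t₀| + |max (s - t₀) 0 - max (t - t₀) 0| = |s - t| := by
  rcases le_total s t₀ with hs | hs <;> rcases le_total t t₀ with ht | ht <;> grind

/-- A force on the torus which depends on the phase-space distribution of the particles, is at most
`M` in absolute value, and depends continuously on the distribution at those distributions that
carry no two velocities at the same point. -/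
structure MeanFieldForce (M : NNReal) where
  /-- The force exerted by the particle distribution `μ` at a point. -/
  field : ProbabilityMeasure Phase → 𝕋 → ℝ
  measurable_field : ∀ μ, Measurable (field μ)
  abs_field_le : ∀ μ x, |field μ x| ≤ M
  continuousAt_integral_field_mul : ∀ (ψ : BoundedContinuousFunction Phase ℝ)
    (μ : ProbabilityMeasure Phase), HasMonokineticAtoms (μ : Measure Phase) →
      ContinuousAt (fun ν : ProbabilityMeasure Phase =>
        ∫ p, field ν p.1 * ψ p ∂(ν : Measure Phase)) μ

namespace Trajectory

variable {M : NNReal}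

/-- The trajectory that follows `γ` until time `t₀` and has constant acceleration afterwards. -/
def continueFrom (t₀ : ℝ) (γ : Trajectory M) (a : Set.Icc (-M : ℝ) M) : Trajectory M :=
  (γ.1, ⟨⟨fun t => γ.2.1 (min t t₀) + a * max (t - t₀) 0, by fun_prop⟩, by
    refine LipschitzWith.of_dist_le_mul fun s t => ?_
    have hv := γ.2.2.dist_le_mul (min s t₀) (min t t₀)
    have ha : |(a : ℝ)| ≤ M := abs_le.2 a.2
    have hsplit : |min s t₀ - min t t₀| + |max (s - t₀) 0 - max (t - t₀) 0| = |s - t| :=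
      abs_min_sub_min_add_abs_max_sub_max s t t₀
    simp only [Real.dist_eq, ContinuousMap.coe_mk] at hv ⊢
    calc
      |γ.2.1 (min s t₀) + a * max (s - t₀) 0 - (γ.2.1 (min t t₀) + a * max (t - t₀) 0)| =
          |(γ.2.1 (min s t₀) - γ.2.1 (min t t₀)) + a * (max (s - t₀) 0 - max (t - t₀) 0)| := by
        ring_nf
      _ ≤ M * |min s t₀ - min t t₀| + M * |max (s - t₀) 0 - max (t - t₀) 0| := by
        refine (abs_add_le _ _).trans (add_le_add hv ?_)
        rw [abs_mul]
        gcongr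
      _ = M * |s - t| := by rw [← mul_add, hsplit]⟩)

lemma continuous_uncurry_continueFrom (t₀ : ℝ) :
    Continuous fun z : Trajectory M × Set.Icc (-M : ℝ) M => continueFrom t₀ z.1 z.2 := by
  refine (continuous_fst.comp continuous_fst).prodMk (Continuous.subtype_mk ?_ _)
  refine ContinuousMap.continuous_of_continuous_uncurry _ ?_
  simp only [Function.uncurry_def, ContinuousMap.coe_mk]
  fun_prop

variable {t₀ t : ℝ} (γ : Trajectory M) (a : Set.Icc (-M : ℝ) M)

lemma state_continueFrom_of_le (ht₀ : 0 ≤ t₀) (ht : t ≤ t₀) :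
    (continueFrom t₀ γ a).state t = γ.state t := by
  have hvel (s : ℝ) (hs : s ≤ t₀) : (continueFrom t₀ γ a).2.1 s = γ.2.1 s := by
    simp [continueFrom, hs]
  have hint : ∫ s in (0 : ℝ)..t, (continueFrom t₀ γ a).2.1 s = ∫ s in (0 : ℝ)..t, γ.2.1 s :=
    intervalIntegral.integral_congr fun s hs => hvel s (hs.2.trans (max_le ht₀ ht))
  rw [state, state, hint, hvel t ht]
  rfl

lemma state_continueFrom_add (ht₀ : 0 ≤ t₀) (ht : 0 ≤ t) :
    (continueFrom t₀ γ a).state (t₀ + t) = accelerate a t (γ.state t₀) := by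
  have hvel (s : ℝ) (hs : t₀ ≤ s) :
      (continueFrom t₀ γ a).2.1 s = γ.2.1 t₀ + a * (s - t₀) := by
    simp [continueFrom, hs]
  have hint : ∫ s in t₀..(t₀ + t), (continueFrom t₀ γ a).2.1 s =
      t * γ.2.1 t₀ + t ^ 2 / 2 * a := by
    rw [intervalIntegral.integral_congr fun s hs =>
      hvel s ((Set.uIcc_of_le (le_add_of_nonneg_right ht)).subset hs).1]
    rw [intervalIntegral.integral_add (Continuous.intervalIntegrable (by fun_prop) _ _)
      (Continuous.intervalIntegrable (by fun_prop) _ _)]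
    simp only [intervalIntegral.integral_const, intervalIntegral.integral_const_mul,
      intervalIntegral.integral_comp_sub_right (fun s => s), integral_id]
    simp only [smul_eq_mul]
    ring
  have hpos := congrArg Prod.fst (state_continueFrom_of_le γ a ht₀ le_rfl)
  have hcont := (continueFrom t₀ γ a).2.1.continuous
  refine Prod.ext ?_ ?_
  · simp only [state, accelerate] at hpos ⊢
    rw [← intervalIntegral.integral_add_adjacent_intervals (hcont.intervalIntegrable 0 t₀)
      (hcont.intervalIntegrable t₀ (t₀ + t)), hint, AddCircle.coe_add, ← add_assoc, hpos]
  · simp [state, accelerate, hvel, ht, mul_comm]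

end Trajectory

namespace MeanFieldForce

variable {M : NNReal} (F : MeanFieldForce M)

/-- One step of the Euler scheme for a single trajectory: from time `t₀` on, its force is frozen at
the value experienced at time `t₀` when the law of the trajectories is `P`. -/
def freezeFrom (t₀ : ℝ) (P : ProbabilityMeasure (Trajectory M)) (γ : Trajectory M) :
    Trajectory M :=
  γ.continueFrom t₀ ⟨F.field (marginal P t₀) (γ.state t₀).1, abs_le.1 (F.abs_field_le _ _)⟩

lemma measurable_freezeFrom (t₀ : ℝ) (P : ProbabilityMeasure (Trajectory M)) :
    Measurable (F.freezeFrom t₀ P) :=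
  (Trajectory.continuous_uncurry_continueFrom t₀).measurable.comp <|
    measurable_id.prodMk <| Measurable.subtype_mk <| (F.measurable_field _).comp
      (Trajectory.continuous_state_apply t₀).measurable.fst

/-- The law of the trajectories after one step of the Euler scheme, started at time `t₀`. -/
def step (t₀ : ℝ) (P : ProbabilityMeasure (Trajectory M)) : ProbabilityMeasure (Trajectory M) :=
  P.map (F.measurable_freezeFrom t₀ P).aemeasurable

/-- The rate of change of `∫ φ dμ` which the Vlasov equation prescribes when the particle
distribution is `μ`. -/
def rate (φ : ℝ × ℝ → ℝ) (μ : ProbabilityMeasure Phase) : ℝ :=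
  ∫ p, (descend (transport φ) p + F.field μ p.1 * descend (velocityDeriv φ) p) ∂(μ : Measure Phase)

variable {F} in
lemma integral_marginal_step {t₀ : ℝ} {P : ProbabilityMeasure (Trajectory M)} (t : ℝ)
    {g : Phase → ℝ} (hg : Measurable g) :
    ∫ p, g p ∂(marginal (F.step t₀ P) t : Measure Phase) =
      ∫ γ, g ((F.freezeFrom t₀ P γ).state t) ∂(P : Measure (Trajectory M)) := by
  rw [integral_marginal _ _ hg, step, ProbabilityMeasure.toMeasure_map,
    integral_map (f := fun γ => g (γ.state t)) (F.measurable_freezeFrom t₀ P).aemeasurable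
      (hg.comp (Trajectory.continuous_state_apply t).measurable).aestronglyMeasurable]

lemma marginal_step_of_le {t₀ t : ℝ} (P : ProbabilityMeasure (Trajectory M)) (ht₀ : 0 ≤ t₀)
    (ht : t ≤ t₀) : marginal (F.step t₀ P) t = marginal P t := by
  refine ProbabilityMeasure.toMeasure_injective ?_
  rw [marginal, marginal, step, ProbabilityMeasure.toMeasure_map, ProbabilityMeasure.toMeasure_map,
    ProbabilityMeasure.toMeasure_map,
    Measure.map_map (Trajectory.continuous_state_apply t).measurable (F.measurable_freezeFrom t₀ P)]
  congr 1
  exact funext fun γ => Trajectory.state_continueFrom_of_le γ _ ht₀ ht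

variable {φ : ℝ × ℝ → ℝ}

lemma measurable_rate_integrand (hφ : TestFun φ) (μ : ProbabilityMeasure Phase) :
    Measurable fun p : Phase =>
      descend (transport φ) p + F.field μ p.1 * descend (velocityDeriv φ) p :=
  (measurable_descend (testFun_transport hφ)).add
    (((F.measurable_field μ).comp measurable_fst).mul
      (measurable_descend (testFun_velocityDeriv hφ)))

lemma exists_abs_rate_integrand_le (hφ : TestFun φ) : ∃ C, ∀ μ p,
    |descend (transport φ) p + F.field μ p.1 * descend (velocityDeriv φ) p| ≤ C := by
  obtain ⟨C₁, hC₁⟩ := exists_abs_descend_le (testFun_transport hφ)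
  obtain ⟨C₂, hC₂⟩ := exists_abs_descend_le (testFun_velocityDeriv hφ)
  refine ⟨C₁ + M * C₂, fun μ p => (abs_add_le _ _).trans (add_le_add (hC₁ p) ?_)⟩
  rw [abs_mul]
  exact mul_le_mul (F.abs_field_le μ p.1) (hC₂ p) (abs_nonneg _) M.coe_nonneg

lemma exists_abs_rate_le (hφ : TestFun φ) : ∃ C, ∀ μ, |F.rate φ μ| ≤ C := by
  obtain ⟨C, hC⟩ := F.exists_abs_rate_integrand_le hφ
  exact ⟨C, fun μ => abs_integral_le_of_abs_le (hC μ)⟩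

lemma continuousAt_rate (hφ : TestFun φ) {μ : ProbabilityMeasure Phase}
    (hμ : HasMonokineticAtoms (μ : Measure Phase)) : ContinuousAt (F.rate φ) μ := by
  have hsplit : F.rate φ = fun ν : ProbabilityMeasure Phase =>
      (∫ p, descendBounded (testFun_transport hφ) p ∂(ν : Measure Phase)) +
        ∫ p, F.field ν p.1 * descendBounded (testFun_velocityDeriv hφ) p ∂(ν : Measure Phase) := by
    funext ν
    obtain ⟨C, hC⟩ := exists_abs_descend_le (testFun_transport hφ)
    obtain ⟨C', hC'⟩ := exists_abs_descend_le (testFun_velocityDeriv hφ)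
    refine integral_add (integrable_of_abs_le (measurable_descend (testFun_transport hφ)) hC)
      (Integrable.bdd_mul (c := M)
        (integrable_of_abs_le (measurable_descend (testFun_velocityDeriv hφ)) hC')
        ((F.measurable_field ν).comp measurable_fst).aestronglyMeasurable
        (Eventually.of_forall fun p => F.abs_field_le ν p.1))
  rw [hsplit]
  exact (ProbabilityMeasure.continuous_integral_boundedContinuousFunction _).continuousAt.add
    (F.continuousAt_integral_field_mul _ μ hμ)

lemma exists_abs_integral_step_sub_sub_le (hφ : TestFun φ) :
    ∃ C, ∀ (P : ProbabilityMeasure (Trajectory M)) (t₀ τ : ℝ), 0 ≤ t₀ → 0 ≤ τ →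
      |(∫ p, descend φ p ∂(marginal (F.step t₀ P) (t₀ + τ) : Measure Phase)) -
        (∫ p, descend φ p ∂(marginal P t₀ : Measure Phase)) -
        τ * F.rate φ (marginal P t₀)| ≤ C * τ ^ 2 := by
  obtain ⟨C, hC⟩ := exists_abs_descend_accelerate_sub_sub_le hφ M
  refine ⟨C, fun P t₀ τ ht₀ hτ => ?_⟩
  obtain ⟨B, hB⟩ := exists_abs_descend_le hφ
  obtain ⟨B', hB'⟩ := F.exists_abs_rate_integrand_le hφ
  have hmeas := measurable_descend hφ
  have hrate := F.measurable_rate_integrand hφ (marginal P t₀)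
  have hstate (t : ℝ) := (Trajectory.continuous_state_apply (M := M) t).measurable
  have hend (γ : Trajectory M) : (F.freezeFrom t₀ P γ).state (t₀ + τ) =
      accelerate (F.field (marginal P t₀) (γ.state t₀).1) τ (γ.state t₀) :=
    Trajectory.state_continueFrom_add γ _ ht₀ hτ
  have hinit : Integrable (fun γ => descend φ (γ.state t₀)) (P : Measure (Trajectory M)) :=
    integrable_of_abs_le (hmeas.comp (hstate t₀)) fun γ => hB _
  have hfinal : Integrable (fun γ => descend φ ((F.freezeFrom t₀ P γ).state (t₀ + τ)))
      (P : Measure (Trajectory M)) :=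
    integrable_of_abs_le (hmeas.comp ((hstate _).comp (F.measurable_freezeFrom t₀ P)))
      fun γ => hB _
  have hslope : Integrable (fun γ => descend (transport φ) (γ.state t₀) +
      F.field (marginal P t₀) (γ.state t₀).1 * descend (velocityDeriv φ) (γ.state t₀))
      (P : Measure (Trajectory M)) :=
    integrable_of_abs_le (hrate.comp (hstate t₀)) fun γ => hB' _ _
  rw [integral_marginal_step _ hmeas, integral_marginal _ _ hmeas, rate,
    integral_marginal _ _ hrate, ← integral_const_mul, ← integral_sub hfinal hinit,
    ← integral_sub (hfinal.sub' hinit) (hslope.const_mul τ)]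
  refine abs_integral_le_of_abs_le fun γ => ?_
  rw [hend]
  exact hC _ (F.abs_field_le _ _) τ hτ (γ.state t₀)

end MeanFieldForce

section GridFloor

/-- The largest multiple of the time step `τ` that is at most `t`, for `0 < τ` and `0 ≤ t`. -/
def gridFloor (τ t : ℝ) : ℝ := τ * ⌊t / τ⌋₊

variable {τ t : ℝ}

lemma gridFloor_le (hτ : 0 < τ) (ht : 0 ≤ t) : gridFloor τ t ≤ t := by
  have := Nat.floor_le (div_nonneg ht hτ.le)
  rwa [le_div_iff₀' hτ] at this

lemma lt_gridFloor_add (hτ : 0 < τ) (t : ℝ) : t < gridFloor τ t + τ := by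
  have := Nat.lt_floor_add_one (t / τ)
  rwa [div_lt_iff₀' hτ, mul_add_one] at this

lemma gridFloor_eq_of_mem_Ico (hτ : 0 < τ) {k : ℕ} (ht : t ∈ Set.Ico (τ * k) (τ * (k + 1))) :
    gridFloor τ t = τ * k := by
  have hfloor : ⌊t / τ⌋₊ = k := by
    rw [Nat.floor_eq_iff (div_nonneg ((by positivity : 0 ≤ τ * k).trans ht.1) hτ.le),
      le_div_iff₀' hτ, div_lt_iff₀' hτ]
    exact ht
  rw [gridFloor, hfloor]

lemma tendsto_gridFloor {τ : ℕ → ℝ} (hpos : ∀ n, 0 < τ n) (hτ : Tendsto τ atTop (𝓝 0))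
    (ht : 0 ≤ t) : Tendsto (fun n => gridFloor (τ n) t) atTop (𝓝 t) := by
  refine tendsto_of_tendsto_of_tendsto_of_le_of_le (g := fun n => t - τ n) ?_ tendsto_const_nhds
    (fun n => ?_) (fun n => gridFloor_le (hpos n) ht)
  · simpa using hτ.const_sub t
  · exact (sub_lt_iff_lt_add.2 (lt_gridFloor_add (hpos n) t)).le

lemma measurable_comp_gridFloor (τ : ℝ) (g : ℝ → ℝ) : Measurable fun t => g (gridFloor τ t) :=
  (measurable_from_nat (f := fun n : ℕ => g (τ * n))).comp
    (Nat.measurable_floor.comp (measurable_id.div_const τ))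

lemma intervalIntegrable_comp_gridFloor (τ : ℝ) {g : ℝ → ℝ} {C : ℝ} (hg : ∀ t, |g t| ≤ C)
    (a b : ℝ) : IntervalIntegrable (fun t => g (gridFloor τ t)) volume a b :=
  (intervalIntegrable_const (c := C)).mono_fun'
    (measurable_comp_gridFloor τ g).aestronglyMeasurable (Eventually.of_forall fun _ => hg _)

lemma integral_comp_gridFloor_cell (hτ : 0 < τ) (g : ℝ → ℝ) (k : ℕ) :
    ∫ t in (τ * k)..(τ * (k + 1)), g (gridFloor τ t) = τ * g (τ * k) := by
  rw [intervalIntegral.integral_congr_Ioo_of_le (g := fun _ => g (τ * k)) (by gcongr; simp)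
    fun t ht => by simp only [gridFloor_eq_of_mem_Ico hτ (Set.Ioo_subset_Ico_self ht)]]
  simp only [intervalIntegral.integral_const, smul_eq_mul]
  ring

end GridFloor

section FreeTransport

variable {M : NNReal}

/-- The trajectory that starts at `p` and has constant velocity. -/
def straightTrajectory (M : NNReal) (p : Phase) : Trajectory M :=
  (p.1, ⟨ContinuousMap.const ℝ p.2, (LipschitzWith.const p.2).weaken zero_le⟩)

lemma continuous_straightTrajectory : Continuous (straightTrajectory M) :=
  continuous_fst.prodMk (Continuous.subtype_mk (ContinuousMap.continuous_const'.comp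
    continuous_snd) _)

lemma marginal_map_straightTrajectory_zero (f₀ : ProbabilityMeasure Phase) :
    marginal (f₀.map (continuous_straightTrajectory (M := M)).aemeasurable) 0 = f₀ := by
  refine ProbabilityMeasure.toMeasure_injective ?_
  rw [marginal, ProbabilityMeasure.toMeasure_map, ProbabilityMeasure.toMeasure_map,
    Measure.map_map (Trajectory.continuous_state_apply 0).measurable
      continuous_straightTrajectory.measurable]
  convert Measure.map_id using 2
  exact funext fun p => Trajectory.state_zero _

end FreeTransport

namespace MeanFieldForce

variable {M : NNReal} (F : MeanFieldForce M) (f₀ : ProbabilityMeasure Phase)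

/-- The law of the trajectories after `k` steps of the Euler scheme with time step `τ` and initial
distribution `f₀`. -/
def eulerLaw (τ : ℝ) : ℕ → ProbabilityMeasure (Trajectory M)
  | 0 => f₀.map continuous_straightTrajectory.aemeasurable
  | k + 1 => F.step (τ * k) (eulerLaw τ k)

variable {f₀} {τ : ℝ}

lemma marginal_eulerLaw_of_le (hτ : 0 ≤ τ) {k K : ℕ} (hkK : k ≤ K) {t : ℝ} (ht : t ≤ τ * k) :
    marginal (F.eulerLaw f₀ τ K) t = marginal (F.eulerLaw f₀ τ k) t := by
  induction K, hkK using Nat.le_induction with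
  | base => rfl
  | succ K hkK ih =>
    rw [← ih, eulerLaw, F.marginal_step_of_le _ (by positivity)]
    exact ht.trans (by gcongr)

lemma marginal_eulerLaw_zero (hτ : 0 ≤ τ) (K : ℕ) : marginal (F.eulerLaw f₀ τ K) 0 = f₀ := by
  rw [F.marginal_eulerLaw_of_le hτ K.zero_le (by simp), eulerLaw,
    marginal_map_straightTrajectory_zero]

lemma exists_abs_integral_eulerLaw_sub_sub_le {φ : ℝ × ℝ → ℝ} (hφ : TestFun φ) :
    ∃ C, ∀ (f₀ : ProbabilityMeasure Phase) (τ : ℝ), 0 < τ → ∀ k K : ℕ, k ≤ K →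
      |(∫ p, descend φ p ∂(marginal (F.eulerLaw f₀ τ K) (τ * k) : Measure Phase)) -
        (∫ p, descend φ p ∂(f₀ : Measure Phase)) -
        ∫ s in (0 : ℝ)..(τ * k), F.rate φ (marginal (F.eulerLaw f₀ τ K) (gridFloor τ s))| ≤
          k * (C * τ ^ 2) := by
  obtain ⟨C, hC⟩ := F.exists_abs_integral_step_sub_sub_le hφ
  obtain ⟨B, hB⟩ := F.exists_abs_rate_le hφ
  refine ⟨C, fun f₀ τ hτ k K hkK => ?_⟩
  induction k with
  | zero => simp [F.marginal_eulerLaw_zero hτ.le]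
  | succ k ih =>
    have hstep := hC (F.eulerLaw f₀ τ k) (τ * k) τ (by positivity) hτ.le
    rw [← mul_add_one, ← eulerLaw, ← F.marginal_eulerLaw_of_le hτ.le (by omega : k ≤ K) le_rfl,
      ← F.marginal_eulerLaw_of_le hτ.le hkK (by push_cast; rfl)] at hstep
    have hint (a b : ℝ) := intervalIntegrable_comp_gridFloor τ
      (g := fun s => F.rate φ (marginal (F.eulerLaw f₀ τ K) s)) (fun _ => hB _) a b
    rw [Nat.cast_succ, ← intervalIntegral.integral_add_adjacent_intervals (hint 0 (τ * k))
      (hint _ _), integral_comp_gridFloor_cell hτ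
        fun s => F.rate φ (marginal (F.eulerLaw f₀ τ K) s)]
    rw [add_one_mul]
    refine le_trans (le_of_eq ?_) ((abs_add_le _ _).trans (add_le_add (ih (by omega)) hstep))
    congr 1
    ring

end MeanFieldForce

/-! ### Passing to the limit in the Euler scheme -/

namespace MeanFieldForce

variable {M : NNReal} (F : MeanFieldForce M) (f₀ : ProbabilityMeasure Phase)

lemma exists_tendsto_eulerLaw : ∃ (τ : ℕ → ℝ) (K : ℕ → ℕ) (P : ProbabilityMeasure (Trajectory M)),
    (∀ n, 0 < τ n) ∧ Tendsto τ atTop (𝓝 0) ∧ Tendsto (fun n => τ n * K n) atTop atTop ∧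
      Tendsto (fun n => F.eulerLaw f₀ (τ n) (K n)) atTop (𝓝 P) := by
  let τ (n : ℕ) : ℝ := 1 / (n + 1)
  let K (n : ℕ) : ℕ := (n + 1) ^ 2
  have hpos (n : ℕ) : 0 < τ n := Nat.one_div_pos_of_nat
  have hτK (n : ℕ) : τ n * K n = n + 1 := by
    simp only [τ, K]
    push_cast
    field_simp
  obtain ⟨P, -, σ, hσ, hP⟩ := (isCompact_closure_setOf_marginal_zero_eq f₀).tendsto_subseq
    fun n => subset_closure (F.marginal_eulerLaw_zero (hpos n).le (K n))
  refine ⟨τ ∘ σ, K ∘ σ, P, fun n => hpos _,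
    tendsto_one_div_add_atTop_nhds_zero_nat.comp hσ.tendsto_atTop, ?_, hP⟩
  simp only [Function.comp_apply, hτK]
  exact tendsto_atTop_add_const_right _ _
    (tendsto_natCast_atTop_atTop.comp hσ.tendsto_atTop)

variable {F f₀} {τ : ℕ → ℝ} {K : ℕ → ℕ} {P : ProbabilityMeasure (Trajectory M)}
  {φ : ℝ × ℝ → ℝ} {t : ℝ}

lemma marginal_zero_of_tendsto_eulerLaw (hpos : ∀ n, 0 < τ n)
    (hP : Tendsto (fun n => F.eulerLaw f₀ (τ n) (K n)) atTop (𝓝 P)) : marginal P 0 = f₀ := by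
  have hlim : Tendsto (fun n => marginal (F.eulerLaw f₀ (τ n) (K n)) 0) atTop
      (𝓝 (marginal P 0)) :=
    tendsto_marginal hP tendsto_const_nhds
  simp only [F.marginal_eulerLaw_zero (hpos _).le] at hlim
  exact tendsto_nhds_unique hlim tendsto_const_nhds

lemma ae_tendsto_rate_eulerLaw_gridFloor (hφ : TestFun φ) (hpos : ∀ n, 0 < τ n)
    (hτ : Tendsto τ atTop (𝓝 0))
    (hP : Tendsto (fun n => F.eulerLaw f₀ (τ n) (K n)) atTop (𝓝 P)) :
    ∀ᵐ s, 0 ≤ s → Tendsto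
      (fun n => F.rate φ (marginal (F.eulerLaw f₀ (τ n) (K n)) (gridFloor (τ n) s))) atTop
      (𝓝 (F.rate φ (marginal P s))) := by
  filter_upwards [ae_hasMonokineticAtoms_marginal P] with s hs hs0
  exact (F.continuousAt_rate hφ hs).tendsto.comp
    (tendsto_marginal hP (tendsto_gridFloor hpos hτ hs0))

lemma aestronglyMeasurable_rate_of_tendsto_eulerLaw (hφ : TestFun φ) (hpos : ∀ n, 0 < τ n)
    (hτ : Tendsto τ atTop (𝓝 0))
    (hP : Tendsto (fun n => F.eulerLaw f₀ (τ n) (K n)) atTop (𝓝 P)) :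
    AEStronglyMeasurable (fun s => F.rate φ (marginal P s)) (volume.restrict (Set.Ici 0)) :=
  aestronglyMeasurable_of_tendsto_ae atTop
    (fun n => (measurable_comp_gridFloor (τ n) fun s =>
      F.rate φ (marginal (F.eulerLaw f₀ (τ n) (K n)) s)).aestronglyMeasurable)
    ((ae_restrict_iff' measurableSet_Ici).2 (ae_tendsto_rate_eulerLaw_gridFloor hφ hpos hτ hP))

lemma tendsto_integral_rate_eulerLaw (hφ : TestFun φ) (hpos : ∀ n, 0 < τ n)
    (hτ : Tendsto τ atTop (𝓝 0))
    (hP : Tendsto (fun n => F.eulerLaw f₀ (τ n) (K n)) atTop (𝓝 P)) (ht : 0 ≤ t) :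
    Tendsto (fun n => ∫ s in (0 : ℝ)..gridFloor (τ n) t,
        F.rate φ (marginal (F.eulerLaw f₀ (τ n) (K n)) (gridFloor (τ n) s)))
      atTop (𝓝 (∫ s in (0 : ℝ)..t, F.rate φ (marginal P s))) := by
  obtain ⟨C, hC⟩ := F.exists_abs_rate_le hφ
  let r (n : ℕ) (s : ℝ) : ℝ :=
    F.rate φ (marginal (F.eulerLaw f₀ (τ n) (K n)) (gridFloor (τ n) s))
  have hr (n : ℕ) (a b : ℝ) : IntervalIntegrable (r n) volume a b :=
    intervalIntegrable_comp_gridFloor (τ n)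
      (g := fun s => F.rate φ (marginal (F.eulerLaw f₀ (τ n) (K n)) s)) (fun _ => hC _) a b
  have hmain : Tendsto (fun n => ∫ s in (0 : ℝ)..t, r n s) atTop
      (𝓝 (∫ s in (0 : ℝ)..t, F.rate φ (marginal P s))) := by
    refine intervalIntegral.tendsto_integral_filter_of_dominated_convergence (fun _ => C)
      (Eventually.of_forall fun n => (hr n 0 t).def'.aestronglyMeasurable)
      (Eventually.of_forall fun n => Eventually.of_forall fun s _ => hC _)
      intervalIntegrable_const ?_
    filter_upwards [ae_tendsto_rate_eulerLaw_gridFloor hφ hpos hτ hP] with s hs hst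
    exact hs ((Set.uIoc_of_le ht ▸ hst).1.le)
  have hremainder : Tendsto (fun n => ∫ s in gridFloor (τ n) t..t, r n s) atTop (𝓝 0) := by
    refine squeeze_zero_norm (fun n => intervalIntegral.norm_integral_le_of_norm_le_const
      fun s _ => hC _) ?_
    have := ((tendsto_gridFloor hpos hτ ht).const_sub t).abs.const_mul C
    simpa using this
  have := hmain.sub hremainder
  simp only [sub_zero] at this
  refine this.congr fun n => ?_
  rw [← intervalIntegral.integral_add_adjacent_intervals (hr n 0 (gridFloor (τ n) t)) (hr n _ t),
    add_sub_cancel_right]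

lemma integral_descend_marginal_of_tendsto_eulerLaw (hφ : TestFun φ) (hpos : ∀ n, 0 < τ n)
    (hτ : Tendsto τ atTop (𝓝 0)) (hK : Tendsto (fun n => τ n * K n) atTop atTop)
    (hP : Tendsto (fun n => F.eulerLaw f₀ (τ n) (K n)) atTop (𝓝 P)) (ht : 0 ≤ t) :
    ∫ p, descend φ p ∂(marginal P t : Measure Phase) =
      (∫ p, descend φ p ∂(f₀ : Measure Phase)) + ∫ s in (0 : ℝ)..t, F.rate φ (marginal P s) := by
  obtain ⟨C, hC⟩ := F.exists_abs_integral_eulerLaw_sub_sub_le hφ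
  have hdefect : Tendsto (fun n =>
      (∫ p, descend φ p
        ∂(marginal (F.eulerLaw f₀ (τ n) (K n)) (gridFloor (τ n) t) : Measure Phase)) -
      (∫ p, descend φ p ∂(f₀ : Measure Phase)) -
      ∫ s in (0 : ℝ)..gridFloor (τ n) t,
        F.rate φ (marginal (F.eulerLaw f₀ (τ n) (K n)) (gridFloor (τ n) s))) atTop (𝓝 0) := by
    refine squeeze_zero_norm' (a := fun n => gridFloor (τ n) t * (C * τ n)) ?_ ?_
    · filter_upwards [hK.eventually_ge_atTop t] with n hn
      have hle : ⌊t / τ n⌋₊ ≤ K n := by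
        refine Nat.floor_le_of_le ?_
        rwa [div_le_iff₀' (hpos n)]
      refine (hC f₀ (τ n) (hpos n) _ _ hle).trans (le_of_eq ?_)
      rw [gridFloor]
      ring
    · simpa using (tendsto_gridFloor hpos hτ ht).mul (hτ.const_mul C)
  have hφint := (ProbabilityMeasure.tendsto_iff_forall_integral_tendsto.1
      (tendsto_marginal hP (tendsto_gridFloor hpos hτ ht))) (descendBounded hφ)
  have hzero := tendsto_nhds_unique hdefect ((hφint.sub_const _).sub
    (tendsto_integral_rate_eulerLaw hφ hpos hτ hP ht))
  change 0 = (∫ p, descend φ p ∂(marginal P t : Measure Phase)) - _ - _ at hzero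
  linarith

end MeanFieldForce

section IntegralEquation

variable {u r : ℝ → ℝ} {u₀ C : ℝ}

lemma intervalIntegrable_of_nonneg_of_abs_le
    (hr : AEStronglyMeasurable r (volume.restrict (Set.Ici 0))) (hC : ∀ t, |r t| ≤ C) {a b : ℝ}
    (ha : 0 ≤ a) (hb : 0 ≤ b) : IntervalIntegrable r volume a b :=
  (intervalIntegrable_const (c := C)).mono_fun'
    (hr.mono_measure (Measure.restrict_mono (fun _ ht => (le_min ha hb).trans ht.1.le) le_rfl))
    (Eventually.of_forall hC)

lemma lipschitzOnWith_of_eq_add_integral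
    (hr : AEStronglyMeasurable r (volume.restrict (Set.Ici 0))) (hC : ∀ t, |r t| ≤ C)
    (hu : ∀ t, 0 ≤ t → u t = u₀ + ∫ s in (0 : ℝ)..t, r s) :
    LipschitzOnWith C.toNNReal u (Set.Ici 0) := by
  refine LipschitzOnWith.of_dist_le_mul fun s hs t ht => ?_
  rw [Real.dist_eq, Real.dist_eq, hu s hs, hu t ht, add_sub_add_left_eq_sub,
    intervalIntegral.integral_interval_sub_left
      (intervalIntegrable_of_nonneg_of_abs_le hr hC le_rfl hs)
      (intervalIntegrable_of_nonneg_of_abs_le hr hC le_rfl ht),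
    Real.coe_toNNReal C ((abs_nonneg _).trans (hC 0))]
  exact intervalIntegral.norm_integral_le_of_norm_le_const (f := r) fun x _ => hC x

lemma hasDerivAt_of_eq_add_integral
    (hr : AEStronglyMeasurable r (volume.restrict (Set.Ici 0))) (hC : ∀ t, |r t| ≤ C)
    (hu : ∀ t, 0 ≤ t → u t = u₀ + ∫ s in (0 : ℝ)..t, r s) {t : ℝ} (ht : 0 < t)
    (hcont : ContinuousAt r t) : HasDerivAt u (r t) t := by
  refine ((intervalIntegral.integral_hasDerivAt_right
    (intervalIntegrable_of_nonneg_of_abs_le hr hC le_rfl ht.le) ⟨_, Ici_mem_nhds ht, hr⟩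
    hcont).const_add u₀).congr_of_eventuallyEq ?_
  filter_upwards [Ici_mem_nhds ht] with s hs using hu s hs

end IntegralEquation

namespace MeanFieldForce

variable {M : NNReal} {F : MeanFieldForce M} {f₀ : ProbabilityMeasure Phase}

lemma vlasovWeak_marginal_of_tendsto_eulerLaw {τ : ℕ → ℝ} {K : ℕ → ℕ}
    {P : ProbabilityMeasure (Trajectory M)} (hpos : ∀ n, 0 < τ n) (hτ : Tendsto τ atTop (𝓝 0))
    (hK : Tendsto (fun n => τ n * K n) atTop atTop)
    (hP : Tendsto (fun n => F.eulerLaw f₀ (τ n) (K n)) atTop (𝓝 P)) :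
    VlasovWeak (Set.Ici 0) (fun t => (marginal P t : Measure Phase))
      fun t x => F.field (marginal P t) x := by
  intro φ hφ
  obtain ⟨C, hC⟩ := F.exists_abs_rate_le hφ
  have hr := aestronglyMeasurable_rate_of_tendsto_eulerLaw hφ hpos hτ hP
  have hu (t : ℝ) (ht : 0 ≤ t) :=
    integral_descend_marginal_of_tendsto_eulerLaw hφ hpos hτ hK hP ht
  refine ⟨fun t _ => ⟨C.toNNReal, 1, one_pos,
    (lipschitzOnWith_of_eq_add_integral hr (fun _ => hC _) hu).mono Set.inter_subset_left⟩, ?_⟩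
  filter_upwards [ae_hasMonokineticAtoms_marginal P, Measure.ae_ne volume 0] with t ht hne hnonneg
  have hcont : ContinuousAt (fun s => F.rate φ (marginal P s)) t :=
    ContinuousAt.comp (F.continuousAt_rate hφ ht)
      (tendsto_marginal tendsto_const_nhds tendsto_id)
  simp only [coe_torusRep]
  exact (hasDerivAt_of_eq_add_integral hr (fun _ => hC _) hu
    (lt_of_le_of_ne hnonneg hne.symm) hcont).hasDerivWithinAt

theorem exists_vlasovWeak (F : MeanFieldForce M) (f₀ : ProbabilityMeasure Phase) :
    ∃ f : ℝ → ProbabilityMeasure Phase, f 0 = f₀ ∧ Continuous f ∧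
      (Integrable (fun p : Phase => |p.2|) (f₀ : Measure Phase) →
        ∀ t, Integrable (fun p : Phase => |p.2|) (f t : Measure Phase)) ∧
      VlasovWeak (Set.Ici 0) (fun t => (f t : Measure Phase)) fun t x => F.field (f t) x := by
  obtain ⟨τ, K, P, hpos, hτ, hK, hP⟩ := F.exists_tendsto_eulerLaw f₀
  have hzero := marginal_zero_of_tendsto_eulerLaw hpos hP
  exact ⟨marginal P, hzero,
    continuous_iff_continuousAt.2 fun t => tendsto_marginal tendsto_const_nhds tendsto_id,
    fun hint t => integrable_abs_snd_marginal (hzero ▸ hint) t,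
    vlasovWeak_marginal_of_tendsto_eulerLaw hpos hτ hK hP⟩

end MeanFieldForce

/-- The electric force in (VPME)_ε for `a = 2 / ε ^ 2`, as a mean-field force. -/
def electricForce {a : ℝ} (ha : 2 ≤ a) :
    MeanFieldForce (a / 4 * (sourceBound a + 1)).toNNReal where
  field μ := electricField a (density μ)
  measurable_field μ := measurable_electricField a (density μ)
  abs_field_le _ x := (abs_electricField_le ha _ x).trans (Real.le_coe_toNNReal _)
  continuousAt_integral_field_mul ψ _ hμ := continuousAt_integral_electricField_mul ha ψ hμ

lemma two_le_two_div_sq {ε : ℝ} (hε : ε ∈ Set.Ioc (0 : ℝ) 1) : 2 ≤ 2 / ε ^ 2 := by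
  obtain ⟨hpos, hle⟩ := hε
  rw [le_div_iff₀ (by positivity)]
  linarith [pow_le_one₀ (n := 2) hpos.le hle]

lemma isVPMESol_of_vlasovWeak {ε : ℝ} (hε : ε ∈ Set.Ioc (0 : ℝ) 1)
    {f : ℝ → ProbabilityMeasure Phase} (hf : Continuous f)
    (hmom : ∀ t, Integrable (fun p : Phase => |p.2|) (f t : Measure Phase))
    (hv : VlasovWeak (Set.Ici 0) (fun t => (f t : Measure Phase))
      fun t x => electricField (2 / ε ^ 2) (density (f t)) x) :
    IsVPMESol ε (Set.Ici 0) (fun t => f t) (fun t x => potential (2 / ε ^ 2) (density (f t)) x)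
      fun t x => electricField (2 / ε ^ 2) (density (f t)) x where
  prob t _ := inferInstance
  moment t _ := hmom t
  weakCont ψ := ((ProbabilityMeasure.continuous_integral_boundedContinuousFunction ψ).comp
    hf).continuousOn
  U_per t _ x := by simp only [AddCircle.coe_add_period]
  U_lip t _ := exists_lipschitzWith_potential (two_le_two_div_sq hε) _
  E_per t _ x := by simp only [AddCircle.coe_add_period]
  poisson t _ ψ hψ hp := by
    have h := weak_poissonBoltzmann (two_le_two_div_sq hε) (density (f t))
      (contDiff_infty.1 hψ 2) hp
    rw [div_div_cancel₀ two_ne_zero] at h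
    rwa [integral_density _ (continuous_comp_torusRep hψ.continuous hp).measurable] at h
  E_def t _ x := by
    simpa only [AddCircle.coe_add, AddCircle.coe_sub] using
      tendsto_symm_slope_potential (two_le_two_div_sq hε) (density (f t)) x
  vlasov := hv

end VPME

/-- Theorem (global existence of weak solutions for (VPME)_ε):
for every ε ∈ (0,1] and every Borel probability measure f₀ on 𝕋 × ℝ with finite first
moment, there exists a global weak solution of (VPME)_ε with initial datum f₀. -/
theorem vpme_global_weak_existence (ε : ℝ) (hε : ε ∈ Set.Ioc (0:ℝ) 1)
    (f₀ : Measure (𝕋 × ℝ)) [IsProbabilityMeasure f₀]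
    (hmom : Integrable (fun p : 𝕋 × ℝ => |p.2|) f₀) :
    ∃ (f : ℝ → Measure (𝕋 × ℝ)) (U E : ℝ → ℝ → ℝ),
      IsVPMESol ε (Set.Ici 0) f U E ∧ f 0 = f₀ := by
  obtain ⟨f, hzero, hf, hmoment, hvlasov⟩ :=
    (VPME.electricForce (VPME.two_le_two_div_sq hε)).exists_vlasovWeak ⟨f₀, inferInstance⟩
  exact ⟨_, _, _, VPME.isVPMESol_of_vlasovWeak hε hf (hmoment hmom) hvlasov,
    congrArg Subtype.val hzero⟩
end
end

section
/- Let ε ∈ (0,1] and let Ū : ℝ → ℝ be a 1-periodic C¹ function with ‖Ū‖_{∞} ≤ 1 and ‖Ū'‖_{∞} ≤ 1. Then there exists a unique 1-periodic C² function Û : ℝ → ℝ satisfying Û'' = e^{(Ū + Û)/ε²} − 1 on ℝ, and this solution satisfies ‖Û‖_{∞} ≤ 3, ‖Û'‖_{∞} ≤ 2, and ‖Û''‖_{∞} ≤ 3/ε². -/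
open MeasureTheory Real Filter Topology

/-!
Twice continuously differentiable periodic functions obey a comparison principle: at a maximum of
`u - v` one has `u'' ≤ v''`, so `u ≤ v` as soon as `v'' < u''` wherever `v < u`. For an equation
`u'' = g (x, u)` with `g` strictly increasing in `u`, this gives uniqueness.

For existence, write the equation as `u'' = Λ u - h (x, u)`. The linear problem `w'' = Λ w - f` is
solved by factoring `d²/dx² - Λ` into two first-order operators, and by comparison `w` moves by at
most `K / Λ` times the change in `f`. If `h` is `K`-Lipschitz in `u` with `K < Λ`, the map sending
`u` to the solution `w` for `f = h (x, u)` is a contraction.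

For the bounds on the derivatives, `W = u' + x` satisfies `W' = exp ((Ub + u) / ε²) > 0` and
increases by exactly `T` over each period `T`. Since `|u''| ≤ (W + x)'` and, once `u'` is bounded,
`|u'''| ≤ C W'`, the oscillations of `u'` and `u''` are bounded; and both functions vanish
somewhere.
-/

/-- A `T`-periodic classical (twice continuously differentiable) solution `u` of the semilinear
equation `u'' = g (x, u)` on the line. -/
structure IsPeriodicSolution (T : ℝ) (g : ℝ → ℝ → ℝ) (u : ℝ → ℝ) : Prop where
  periodic : Function.Periodic u T
  contDiff : ContDiff ℝ 2 u
  deriv_deriv_eq : ∀ x, deriv (deriv u) x = g x (u x)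

section Comparison

variable {T : ℝ} {u v : ℝ → ℝ}

theorem deriv_deriv_nonpos_of_isLocalMax {x₀ : ℝ} (hmax : IsLocalMax u x₀)
    (hu : ContinuousAt u x₀) : deriv (deriv u) x₀ ≤ 0 := by
  by_contra! hpos
  have hmin : IsLocalMin u x₀ := isLocalMin_of_deriv_deriv_pos hpos hmax.deriv_eq_zero hu
  have hconst : u =ᶠ[𝓝 x₀] fun _ => u x₀ := by
    filter_upwards [hmax, hmin] with x hle hge using le_antisymm hle hge
  have hzero : deriv (deriv u) x₀ = 0 := by rw [hconst.deriv.deriv_eq]; simp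
  exact hpos.ne' hzero

theorem deriv_deriv_sub (hu : ContDiff ℝ 2 u) (hv : ContDiff ℝ 2 v) (x : ℝ) :
    deriv (deriv (u - v)) x = deriv (deriv u) x - deriv (deriv v) x := by
  simpa [iteratedDeriv_succ] using iteratedDeriv_sub (n := 2) (x := x) hu.contDiffAt hv.contDiffAt

theorem le_of_periodic_of_deriv_deriv_lt (hT : T ≠ 0)
    (hu : Function.Periodic u T) (hv : Function.Periodic v T)
    (hu₂ : ContDiff ℝ 2 u) (hv₂ : ContDiff ℝ 2 v)
    (h : ∀ x, v x < u x → deriv (deriv v) x < deriv (deriv u) x) (x : ℝ) : u x ≤ v x := by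
  have hcont : Continuous (u - v) := (hu₂.sub hv₂).continuous
  obtain ⟨_, ⟨x₀, rfl⟩, hx₀⟩ :=
    ((hu.sub hv).compact_of_continuous hT hcont).exists_isGreatest (Set.range_nonempty _)
  have hmax : ∀ y, u y - v y ≤ u x₀ - v x₀ := fun y => hx₀ ⟨y, rfl⟩
  have hderiv : deriv (deriv (u - v)) x₀ ≤ 0 :=
    deriv_deriv_nonpos_of_isLocalMax (Eventually.of_forall hmax) hcont.continuousAt
  rw [deriv_deriv_sub hu₂ hv₂, sub_nonpos] at hderiv
  have hle : u x₀ ≤ v x₀ := le_of_not_gt fun hlt => (h x₀ hlt).not_ge hderiv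
  linarith [hmax x]

end Comparison

namespace IsPeriodicSolution

variable {T : ℝ} {g : ℝ → ℝ → ℝ} {u v : ℝ → ℝ}

theorem const {c : ℝ} (hc : ∀ x, g x c = 0) : IsPeriodicSolution T g fun _ => c where
  periodic _ := rfl
  contDiff := contDiff_const
  deriv_deriv_eq x := by simp [hc x]

theorem hasDerivAt (hu : IsPeriodicSolution T g u) (x : ℝ) : HasDerivAt u (deriv u x) x :=
  (hu.contDiff.differentiable two_ne_zero x).hasDerivAt

theorem hasDerivAt_deriv (hu : IsPeriodicSolution T g u) (x : ℝ) :
    HasDerivAt (deriv u) (g x (u x)) x := by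
  have hderiv : ContDiff ℝ 1 (deriv u) := (contDiff_succ_iff_deriv (n := 1).1 hu.contDiff).2.2
  rw [← hu.deriv_deriv_eq]
  exact (hderiv.differentiable one_ne_zero x).hasDerivAt

theorem of_hasDerivAt {u' : ℝ → ℝ} (hper : Function.Periodic u T)
    (hu : ∀ x, HasDerivAt u (u' x) x) (hu' : ∀ x, HasDerivAt u' (g x (u x)) x)
    (hg : Continuous fun x => g x (u x)) : IsPeriodicSolution T g u := by
  have hderiv : deriv u = u' := funext fun x => (hu x).deriv
  have hderiv₂ : deriv u' = fun x => g x (u x) := funext fun x => (hu' x).deriv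
  refine ⟨hper, ?_, fun x => by rw [hderiv, hderiv₂]⟩
  rw [← one_add_one_eq_two, contDiff_succ_iff_deriv, hderiv, contDiff_one_iff_deriv, hderiv₂]
  exact ⟨fun x => (hu x).differentiableAt, by simp, fun x => (hu' x).differentiableAt, hg⟩

theorem periodic_deriv (hu : IsPeriodicSolution T g u) : Function.Periodic (deriv u) T := by
  intro x
  rw [← deriv_comp_add_const, funext hu.periodic]

theorem unique (hT : T ≠ 0) (hg : ∀ x, StrictMono (g x)) (hu : IsPeriodicSolution T g u)
    (hv : IsPeriodicSolution T g v) : u = v := by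
  have hle : ∀ {u v : ℝ → ℝ}, IsPeriodicSolution T g u → IsPeriodicSolution T g v →
      ∀ x, u x ≤ v x := fun hu hv =>
    le_of_periodic_of_deriv_deriv_lt hT hu.periodic hv.periodic hu.contDiff hv.contDiff
      fun x hlt => by
        rw [hu.deriv_deriv_eq, hv.deriv_deriv_eq]
        exact hg x hlt
  exact funext fun x => (hle hu hv x).antisymm (hle hv hu x)

theorem le_add_of_linear {Λ c : ℝ} {f₁ f₂ : ℝ → ℝ} (hT : T ≠ 0) (hΛ : 0 < Λ)
    (hu : IsPeriodicSolution T (fun x s => Λ * s - f₁ x) u)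
    (hv : IsPeriodicSolution T (fun x s => Λ * s - f₂ x) v)
    (hf : ∀ x, f₁ x ≤ f₂ x + Λ * c) (x : ℝ) : u x ≤ v x + c := by
  refine le_of_periodic_of_deriv_deriv_lt (v := fun x => v x + c) hT hu.periodic
    (hv.periodic.comp (· + c)) hu.contDiff (hv.contDiff.add contDiff_const) (fun x hlt => ?_) x
  rw [deriv_add_const', hu.deriv_deriv_eq, hv.deriv_deriv_eq]
  linarith [hf x, mul_lt_mul_of_pos_left hlt hΛ]

theorem abs_sub_le_of_linear {Λ c : ℝ} {f₁ f₂ : ℝ → ℝ} (hT : T ≠ 0) (hΛ : 0 < Λ)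
    (hu : IsPeriodicSolution T (fun x s => Λ * s - f₁ x) u)
    (hv : IsPeriodicSolution T (fun x s => Λ * s - f₂ x) v)
    (hf : ∀ x, |f₁ x - f₂ x| ≤ Λ * c) (x : ℝ) : |u x - v x| ≤ c := by
  simp only [abs_sub_le_iff, sub_le_iff_le_add'] at hf ⊢
  exact ⟨hu.le_add_of_linear hT hΛ hv (hf · |>.1) x, hv.le_add_of_linear hT hΛ hu (hf · |>.2) x⟩

end IsPeriodicSolution

section Linear

variable {T : ℝ} {f : ℝ → ℝ}

theorem exists_periodic_hasDerivAt_sub_mul {k : ℝ} (hk : k ≠ 0) (hT : T ≠ 0) (hf : Continuous f)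
    (hfT : Function.Periodic f T) :
    ∃ y : ℝ → ℝ, Function.Periodic y T ∧ ∀ x, HasDerivAt y (f x - k * y x) x := by
  let F : ℝ → ℝ := fun x => ∫ s in (0 : ℝ)..x, exp (k * s) * f s
  have hcont : Continuous fun s => exp (k * s) * f s := by fun_prop
  have hF_add (x : ℝ) : F (x + T) = F T + exp (k * T) * F x := by
    have hshift : ∫ s in T..(x + T), exp (k * s) * f s = exp (k * T) * F x := by
      rw [← zero_add T, ← add_assoc, add_zero, ← intervalIntegral.integral_comp_add_right,
        zero_add, ← intervalIntegral.integral_const_mul]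
      simp only [hfT _, mul_add, exp_add, mul_left_comm, mul_assoc]
    rw [← hshift, intervalIntegral.integral_add_adjacent_intervals] <;>
      exact hcont.intervalIntegrable _ _
  have hexp : exp (k * T) - 1 ≠ 0 := by simpa [sub_eq_zero] using ⟨hk, hT⟩
  -- The constant of integration that makes variation of parameters `T`-periodic.
  obtain ⟨C, hC⟩ : ∃ C, C + F T = exp (k * T) * C :=
    ⟨F T / (exp (k * T) - 1), by field_simp; ring⟩
  refine ⟨fun x => exp (-(k * x)) * (C + F x), fun x => ?_, fun x => ?_⟩
  · calc exp (-(k * (x + T))) * (C + F (x + T))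
        = exp (-(k * x)) * (exp (-(k * T)) * exp (k * T)) * (C + F x) := by
          rw [hF_add, ← add_assoc, hC, mul_add k, neg_add, exp_add]
          ring
      _ = exp (-(k * x)) * (C + F x) := by rw [← exp_add]; simp
  · have hF : HasDerivAt F (exp (k * x) * f x) x :=
      (hcont.integral_hasStrictDerivAt 0 x).hasDerivAt
    have hE : HasDerivAt (fun x => exp (-(k * x))) (exp (-(k * x)) * -(k * 1)) x :=
      ((hasDerivAt_id x).const_mul k).neg.exp
    have hcancel : exp (-(k * x)) * exp (k * x) = 1 := by rw [← exp_add]; simp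
    refine (hE.mul (hF.const_add C)).congr_deriv ?_
    linear_combination f x * hcancel

theorem exists_isPeriodicSolution_linear {Λ : ℝ} (hT : T ≠ 0) (hΛ : 0 < Λ) (hf : Continuous f)
    (hfT : Function.Periodic f T) :
    ∃ w, IsPeriodicSolution T (fun x s => Λ * s - f x) w := by
  obtain ⟨k, hk, rfl⟩ : ∃ k : ℝ, k ≠ 0 ∧ k ^ 2 = Λ := ⟨√Λ, (sqrt_pos.2 hΛ).ne', sq_sqrt hΛ.le⟩
  -- `d²/dx² - k² = (d/dx + k) (d/dx - k)`
  obtain ⟨y, hyT, hy⟩ := exists_periodic_hasDerivAt_sub_mul hk hT hf hfT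
  have hyc : Continuous y := continuous_iff_continuousAt.2 fun x => (hy x).continuousAt
  obtain ⟨w, hwT, hw⟩ :=
    exists_periodic_hasDerivAt_sub_mul (neg_ne_zero.2 hk) hT hyc.neg (hyT.comp Neg.neg)
  have hwc : Continuous w := continuous_iff_continuousAt.2 fun x => (hw x).continuousAt
  refine ⟨w, .of_hasDerivAt hwT hw (fun x => ?_) (by fun_prop)⟩
  refine ((hy x).neg.sub ((hw x).const_mul (-k))).congr_deriv ?_
  simp only [Pi.neg_apply]
  ring

end Linear

section Existence

variable {T Λ a b : ℝ}

theorem exists_continuousMap_addCircle_eq {X : Type*} [TopologicalSpace X] {p : ℝ → X}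
    (hp : Continuous p) (hpT : Function.Periodic p T) :
    ∃ q : C(AddCircle T, X), ∀ x : ℝ, q x = p x :=
  ⟨⟨hpT.lift, continuous_coinduced_dom.2 hp⟩, hpT.lift_coe⟩

theorem exists_isPeriodicSolution_linear_mem_Icc {f : ℝ → ℝ} (hT : T ≠ 0) (hΛ : 0 < Λ)
    (hf : Continuous f) (hfT : Function.Periodic f T)
    (hfab : ∀ x, f x ∈ Set.Icc (Λ * a) (Λ * b)) :
    ∃ q : C(AddCircle T, Set.Icc a b),
      IsPeriodicSolution T (fun x s => Λ * s - f x) fun x => (q x : ℝ) := by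
  obtain ⟨w, hw⟩ := exists_isPeriodicSolution_linear hT hΛ hf hfT
  have hconst (c : ℝ) : IsPeriodicSolution T (fun _ s => Λ * s - Λ * c) fun _ => c :=
    .const fun _ => sub_self _
  have hmem (x : ℝ) : w x ∈ Set.Icc a b :=
    ⟨by simpa using (hconst a).le_add_of_linear hT hΛ hw (c := 0) (by simpa using (hfab · |>.1)) x,
      by simpa using hw.le_add_of_linear hT hΛ (hconst b) (c := 0) (by simpa using (hfab · |>.2)) x⟩
  obtain ⟨q, hq⟩ := exists_continuousMap_addCircle_eq (p := fun x => (⟨w x, hmem x⟩ : Set.Icc a b))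
    (hw.contDiff.continuous.subtype_mk hmem) fun x => Subtype.ext (hw.periodic x)
  exact ⟨q, by simpa only [hq] using hw⟩

open scoped NNReal in
theorem exists_isPeriodicSolution_of_lipschitzOnWith {K : ℝ≥0} {h : ℝ → ℝ → ℝ} (hT : 0 < T)
    (hab : a ≤ b) (hKΛ : K < Λ) (hh : Continuous h.uncurry) (hhT : Function.Periodic h T)
    (hlip : ∀ x, LipschitzOnWith K (h x) (Set.Icc a b))
    (hmaps : ∀ x, Set.MapsTo (h x) (Set.Icc a b) (Set.Icc (Λ * a) (Λ * b))) :
    ∃ u, IsPeriodicSolution T (fun x s => Λ * s - h x s) u ∧ ∀ x, u x ∈ Set.Icc a b := by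
  have : Fact (0 < T) := ⟨hT⟩
  have : Nonempty C(AddCircle T, Set.Icc a b) := ⟨.const _ ⟨a, Set.left_mem_Icc.2 hab⟩⟩
  have hΛ : 0 < Λ := K.coe_nonneg.trans_lt hKΛ
  have hsolve (p : C(AddCircle T, Set.Icc a b)) : ∃ q : C(AddCircle T, Set.Icc a b),
      IsPeriodicSolution T (fun x s => Λ * s - h x (p x)) fun x => (q x : ℝ) :=
    exists_isPeriodicSolution_linear_mem_Icc hT.ne' hΛ
      (hh.comp₂ continuous_id <| continuous_subtype_val.comp <|
        p.continuous.comp (AddCircle.continuous_mk' T))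
      (fun x => by rw [hhT, AddCircle.coe_add_period]) fun x => hmaps x (p x).2
  choose S hS using hsolve
  have hS_contracting : ContractingWith (K / Λ.toNNReal) S := by
    refine ⟨(div_lt_one (toNNReal_pos.2 hΛ)).2 (lt_toNNReal_iff_coe_lt.2 hKΛ),
      .of_dist_le_mul fun p q => ?_⟩
    rw [NNReal.coe_div, coe_toNNReal Λ hΛ.le, ContinuousMap.dist_le (by positivity)]
    intro θ
    induction θ using QuotientAddGroup.induction_on with | H x => ?_
    refine (hS p).abs_sub_le_of_linear hT.ne' hΛ (hS q) (fun y => ?_) x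
    calc |h y (p y) - h y (q y)| ≤ K * dist (p y) (q y) :=
          (hlip y).dist_le_mul _ (p y).2 _ (q y).2
      _ ≤ K * dist p q := by gcongr; exact ContinuousMap.dist_apply_le_dist _
      _ = Λ * (K / Λ * dist p q) := by field_simp
  set p := hS_contracting.fixedPoint
  have hp : S p = p := hS_contracting.fixedPoint_isFixedPt
  have hsol := hS p
  rw [hp] at hsol
  exact ⟨fun x => p x, ⟨hsol.periodic, hsol.contDiff, hsol.deriv_deriv_eq⟩, fun x => (p x).2⟩

theorem exists_isPeriodicSolution_of_hasDerivAt {m : ℝ} {g g' : ℝ → ℝ → ℝ} (hT : 0 < T)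
    (hab : a ≤ b) (hg : Continuous g.uncurry) (hgT : Function.Periodic g T)
    (ha : ∀ x, g x a ≤ 0) (hb : ∀ x, 0 ≤ g x b) (hm : 0 < m)
    (hg' : ∀ x, ∀ s ∈ Set.Icc a b, HasDerivAt (g x) (g' x s) s)
    (hbound : ∀ x, ∀ s ∈ Set.Icc a b, g' x s ∈ Set.Icc m Λ) :
    ∃ u, IsPeriodicSolution T g u ∧ ∀ x, u x ∈ Set.Icc a b := by
  have haI : a ∈ Set.Icc a b := Set.left_mem_Icc.2 hab
  have hbI : b ∈ Set.Icc a b := Set.right_mem_Icc.2 hab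
  have hmΛ : m ≤ Λ := (hbound 0 a haI).1.trans (hbound 0 a haI).2
  let h : ℝ → ℝ → ℝ := fun x s => Λ * s - g x s
  have hderiv (x s : ℝ) (hs : s ∈ Set.Icc a b) : HasDerivAt (h x) (Λ - g' x s) s :=
    (((hasDerivAt_id s).const_mul Λ).sub (hg' x s hs)).congr_deriv (by rw [mul_one])
  have hlip (x : ℝ) : LipschitzOnWith (Λ - m).toNNReal (h x) (Set.Icc a b) := by
    refine (convex_Icc a b).lipschitzOnWith_of_nnnorm_hasDerivWithin_le
      (fun s hs => (hderiv x s hs).hasDerivWithinAt) fun s hs => ?_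
    obtain ⟨hml, hmu⟩ := hbound x s hs
    rw [← norm_toNNReal, norm_eq_abs, abs_of_nonneg (sub_nonneg.2 hmu)]
    gcongr
  have hmono (x : ℝ) : MonotoneOn (h x) (Set.Icc a b) :=
    monotoneOn_of_hasDerivWithinAt_nonneg (convex_Icc a b)
      (fun s hs => (hderiv x s hs).continuousAt.continuousWithinAt)
      (fun s hs => (hderiv x s (interior_subset hs)).hasDerivWithinAt)
      fun s hs => sub_nonneg.2 (hbound x s (interior_subset hs)).2
  have hmaps (x : ℝ) : Set.MapsTo (h x) (Set.Icc a b) (Set.Icc (Λ * a) (Λ * b)) := fun s hs =>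
    ⟨(le_sub_self_iff _ |>.2 (ha x)).trans (hmono x haI hs hs.1),
      (hmono x hs hbI hs.2).trans (sub_le_self _ (hb x))⟩
  have hh : Continuous h.uncurry := (continuous_const.mul continuous_snd).sub hg
  obtain ⟨u, hu, hmem⟩ := exists_isPeriodicSolution_of_lipschitzOnWith hT hab
    (by rw [coe_toNNReal _ (sub_nonneg.2 hmΛ)]; linarith) hh
    (fun x => by simp only [h, hgT x]) hlip hmaps
  exact ⟨u, by simpa [h] using hu, hmem⟩

end Existence

section Oscillation

variable {f f' W W' : ℝ → ℝ}

theorem abs_sub_le_sub_of_abs_deriv_le_deriv (hf : ∀ x, HasDerivAt f (f' x) x)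
    (hW : ∀ x, HasDerivAt W (W' x) x) (hfW : ∀ x, |f' x| ≤ W' x) {x y : ℝ} (hxy : x ≤ y) :
    |f y - f x| ≤ W y - W x := by
  have hsub : Monotone (W - f) := monotone_of_hasDerivAt_nonneg (fun x => (hW x).sub (hf x))
    fun x => sub_nonneg.2 (abs_le.1 (hfW x)).2
  have hadd : Monotone (W + f) := monotone_of_hasDerivAt_nonneg (fun x => (hW x).add (hf x))
    fun x => neg_le_iff_add_nonneg'.1 (abs_le.1 (hfW x)).1
  have hsub_le : W x - f x ≤ W y - f y := hsub hxy
  have hadd_le : W x + f x ≤ W y + f y := hadd hxy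
  exact abs_sub_le_iff.2 ⟨by linarith, by linarith⟩

theorem two_mul_abs_sub_le_of_periodic {T c : ℝ} (hT : 0 < T) (hfT : Function.Periodic f T)
    (hf : ∀ x, HasDerivAt f (f' x) x) (hW : ∀ x, HasDerivAt W (W' x) x)
    (hfW : ∀ x, |f' x| ≤ W' x) (hWT : ∀ x, W (x + T) = W x + c) (x y : ℝ) :
    2 * |f x - f y| ≤ c := by
  obtain ⟨z, ⟨hyz, hzy⟩, hz⟩ := hfT.exists_mem_Ico hT x y
  -- Go from `y` to `z` in both directions around the circle.
  have hright : |f z - f y| ≤ W z - W y := abs_sub_le_sub_of_abs_deriv_le_deriv hf hW hfW hyz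
  have hleft : |f (y + T) - f z| ≤ W (y + T) - W z :=
    abs_sub_le_sub_of_abs_deriv_le_deriv hf hW hfW hzy.le
  rw [hfT, hWT, abs_sub_comm] at hleft
  rw [hz]
  linarith

theorem exists_deriv_eq_zero_of_periodic {T : ℝ} (hT : 0 < T) (hf : Continuous f)
    (hfT : Function.Periodic f T) : ∃ x, deriv f x = 0 := by
  obtain ⟨x, -, hx⟩ := exists_deriv_eq_zero hT hf.continuousOn hfT.eq.symm
  exact ⟨x, hx⟩

end Oscillation

namespace IsPeriodicSolution

variable {T : ℝ} {g : ℝ → ℝ → ℝ} {u : ℝ → ℝ}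

theorem exists_source_eq_zero (hT : 0 < T) (hu : IsPeriodicSolution T g u) :
    ∃ x, g x (u x) = 0 := by
  obtain ⟨x, hx⟩ := exists_deriv_eq_zero_of_periodic hT
    (continuous_iff_continuousAt.2 fun x => (hu.hasDerivAt_deriv x).continuousAt) hu.periodic_deriv
  exact ⟨x, hu.deriv_deriv_eq x ▸ hx⟩

theorem abs_deriv_le {c : ℝ} (hT : 0 < T) (hu : IsPeriodicSolution T g u)
    (hg : ∀ x, -c ≤ g x (u x)) (x : ℝ) :
    |deriv u x| ≤ c * T := by
  obtain ⟨z, hz⟩ := exists_deriv_eq_zero_of_periodic hT hu.contDiff.continuous hu.periodic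
  obtain ⟨y, hy⟩ := hu.exists_source_eq_zero hT
  have hc : 0 ≤ c := by linarith [hg y]
  have hosc : 2 * |deriv u x - deriv u z| ≤ 2 * c * T :=
    two_mul_abs_sub_le_of_periodic (W := fun x => deriv u x + 2 * c * x) hT hu.periodic_deriv
      hu.hasDerivAt_deriv (fun x => (hu.hasDerivAt_deriv x).add ((hasDerivAt_id x).const_mul _))
      (fun x => abs_le.2 ⟨by linarith [hg x], by linarith [hg x]⟩)
      (fun x => by rw [hu.periodic_deriv]; ring) x z
  rw [hz, sub_zero] at hosc
  linarith

end IsPeriodicSolution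

section Boltzmann

variable {T L M ε : ℝ} {Ub u : ℝ → ℝ}

/-- The right-hand side `exp ((Ub + u) / ε²) - 1` of the Poisson–Boltzmann equation for the unknown
part `u` of the potential `Ub + u`, as a function of the position `x` and the value `s` of `u`. -/
noncomputable def boltzmannSource (ε : ℝ) (Ub : ℝ → ℝ) (x s : ℝ) : ℝ :=
  exp ((Ub x + s) / ε ^ 2) - 1

theorem strictMono_boltzmannSource (hε : ε ≠ 0) (x : ℝ) : StrictMono (boltzmannSource ε Ub x) := by
  intro s t hst
  unfold boltzmannSource
  gcongr

theorem neg_one_le_boltzmannSource (x s : ℝ) : -1 ≤ boltzmannSource ε Ub x s := by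
  unfold boltzmannSource
  linarith [exp_pos ((Ub x + s) / ε ^ 2)]

theorem exists_isPeriodicSolution_boltzmannSource (hT : 0 < T) (hε : ε ≠ 0)
    (hUb : Continuous Ub) (hUbT : Function.Periodic Ub T) (hM : ∀ x, |Ub x| ≤ M) :
    ∃ u, IsPeriodicSolution T (boltzmannSource ε Ub) u ∧ ∀ x, |u x| ≤ M := by
  have hM₀ : 0 ≤ M := (abs_nonneg _).trans (hM 0)
  have hcont : Continuous (boltzmannSource ε Ub).uncurry := by
    unfold boltzmannSource Function.uncurry
    fun_prop
  have hper : Function.Periodic (boltzmannSource ε Ub) T := fun x => by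
    unfold boltzmannSource
    rw [hUbT]
  have hneg (x : ℝ) : boltzmannSource ε Ub x (-M) ≤ 0 :=
    sub_nonpos.2 <| exp_le_one_iff.2 <|
      div_nonpos_of_nonpos_of_nonneg (by linarith [(abs_le.1 (hM x)).2]) (sq_nonneg ε)
  have hpos (x : ℝ) : 0 ≤ boltzmannSource ε Ub x M :=
    sub_nonneg.2 <| one_le_exp <|
      div_nonneg (by linarith [(abs_le.1 (hM x)).1]) (sq_nonneg ε)
  have hderiv (x s : ℝ) :
      HasDerivAt (boltzmannSource ε Ub x) (exp ((Ub x + s) / ε ^ 2) / ε ^ 2) s :=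
    ((((hasDerivAt_id s).const_add (Ub x)).div_const (ε ^ 2)).exp.sub_const 1).congr_deriv
      (mul_one_div _ _)
  have hbound (x s : ℝ) (hs : s ∈ Set.Icc (-M) M) : exp ((Ub x + s) / ε ^ 2) / ε ^ 2 ∈
      Set.Icc (exp (-(2 * M) / ε ^ 2) / ε ^ 2) (exp (2 * M / ε ^ 2) / ε ^ 2) := by
    obtain ⟨hl, hu⟩ := abs_le.1 (hM x)
    constructor <;> gcongr <;> linarith [hs.1, hs.2]
  obtain ⟨u, hu, hmem⟩ := exists_isPeriodicSolution_of_hasDerivAt hT (neg_le_self hM₀) hcont hper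
    hneg hpos (by positivity) (fun x s _ => hderiv x s) hbound
  exact ⟨u, hu, fun x => abs_le.2 (hmem x)⟩

theorem IsPeriodicSolution.abs_boltzmannSource_le (hT : 0 < T)
    (hu : IsPeriodicSolution T (boltzmannSource ε Ub) u) (hUb : Differentiable ℝ Ub)
    (hUbT : Function.Periodic Ub T) (hL : ∀ x, |deriv Ub x| ≤ L) (x : ℝ) :
    |boltzmannSource ε Ub x (u x)| ≤ (L + T) * T / 2 / ε ^ 2 := by
  set φ : ℝ → ℝ := fun x => exp ((Ub x + u x) / ε ^ 2)
  have hφT : Function.Periodic φ T := fun x => by simp only [φ, hUbT x, hu.periodic x]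
  have hφ' (x : ℝ) : HasDerivAt φ (φ x * ((deriv Ub x + deriv u x) / ε ^ 2)) x :=
    (((hUb x).hasDerivAt.add (hu.hasDerivAt x)).div_const _).exp
  have hV' (x : ℝ) : |deriv Ub x + deriv u x| ≤ L + T := by
    have hu' : |deriv u x| ≤ 1 * T := hu.abs_deriv_le hT (fun x => neg_one_le_boltzmannSource x _) x
    exact (abs_add_le _ _).trans (add_le_add (hL x) (by rwa [one_mul] at hu'))
  let W : ℝ → ℝ := fun x => (deriv u x + x) * ((L + T) / ε ^ 2)
  have hW (x : ℝ) : HasDerivAt W (φ x * ((L + T) / ε ^ 2)) x :=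
    (((hu.hasDerivAt_deriv x).add (hasDerivAt_id x)).mul_const _).congr_deriv <| by
      simp [φ, boltzmannSource]
  have hφW (x : ℝ) : |φ x * ((deriv Ub x + deriv u x) / ε ^ 2)| ≤ φ x * ((L + T) / ε ^ 2) := by
    rw [abs_mul, abs_div, abs_of_pos (exp_pos _), abs_of_nonneg (sq_nonneg ε)]
    gcongr
    exact hV' x
  obtain ⟨z, hz⟩ := hu.exists_source_eq_zero hT
  have hφz : φ z = 1 := sub_eq_zero.1 hz
  have hosc : 2 * |φ x - φ z| ≤ T * ((L + T) / ε ^ 2) :=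
    two_mul_abs_sub_le_of_periodic hT hφT hφ' hW hφW
      (fun x => by simp only [W, hu.periodic_deriv x]; ring) x z
  rw [hφz] at hosc
  calc |φ x - 1| ≤ T * ((L + T) / ε ^ 2) / 2 := by linarith
    _ = (L + T) * T / 2 / ε ^ 2 := by ring

theorem hatU_exists_unique_general (hT : 0 < T) (hε : ε ≠ 0) (hUbT : Function.Periodic Ub T)
    (hUb : Differentiable ℝ Ub) (hM : ∀ x, |Ub x| ≤ M) (hL : ∀ x, |deriv Ub x| ≤ L) :
    ∃ u, (IsPeriodicSolution T (boltzmannSource ε Ub) u ∧ (∀ x, |u x| ≤ M) ∧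
        (∀ x, |deriv u x| ≤ T) ∧ ∀ x, |deriv (deriv u) x| ≤ (L + T) * T / 2 / ε ^ 2) ∧
      ∀ v, IsPeriodicSolution T (boltzmannSource ε Ub) v → v = u := by
  obtain ⟨u, hu, huM⟩ := exists_isPeriodicSolution_boltzmannSource hT hε hUb.continuous hUbT hM
  refine ⟨u, ⟨hu, huM, fun x => ?_, fun x => ?_⟩, fun v hv => ?_⟩
  · simpa using hu.abs_deriv_le hT (fun x => neg_one_le_boltzmannSource x _) x
  · rw [hu.deriv_deriv_eq]
    exact hu.abs_boltzmannSource_le hT hUb hUbT hL x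
  · exact hv.unique hT.ne' (strictMono_boltzmannSource hε) hu

end Boltzmann

/-- Lemma (existence, uniqueness and bounds for the regular part of the electric
potential): given a 1-periodic C¹ function Ū with ‖Ū‖_∞ ≤ 1 and ‖Ū'‖_∞ ≤ 1, there
exists a unique 1-periodic C² solution Û of Û'' = e^{(Ū+Û)/ε²} − 1, and it satisfies
‖Û‖_∞ ≤ 3, ‖Û'‖_∞ ≤ 2, ‖Û''‖_∞ ≤ 3/ε². -/
theorem hatU_exists_unique (ε : ℝ) (hε : ε ∈ Set.Ioc (0:ℝ) 1)
    (Ub : ℝ → ℝ) (hper : Function.Periodic Ub 1) (hC1 : ContDiff ℝ 1 Ub)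
    (hU : ∀ x, |Ub x| ≤ 1) (hU' : ∀ x, |deriv Ub x| ≤ 1) :
    ∃ Uh : ℝ → ℝ,
      (Function.Periodic Uh 1 ∧ ContDiff ℝ 2 Uh ∧
        (∀ x, deriv (deriv Uh) x = Real.exp ((Ub x + Uh x)/ε^2) - 1) ∧
        (∀ x, |Uh x| ≤ 3) ∧ (∀ x, |deriv Uh x| ≤ 2) ∧
        (∀ x, |deriv (deriv Uh) x| ≤ 3/ε^2)) ∧
      ∀ Uh' : ℝ → ℝ, Function.Periodic Uh' 1 → ContDiff ℝ 2 Uh' →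
        (∀ x, deriv (deriv Uh') x = Real.exp ((Ub x + Uh' x)/ε^2) - 1) →
        Uh' = Uh := by
  obtain ⟨u, ⟨hu, hu₀, hu₁, hu₂⟩, huniq⟩ :=
    hatU_exists_unique_general one_pos hε.1.ne' hper (hC1.differentiable one_ne_zero) hU hU'
  exact ⟨u, ⟨hu.periodic, hu.contDiff, hu.deriv_deriv_eq, fun x => (hu₀ x).trans (by norm_num),
    fun x => (hu₁ x).trans one_le_two, fun x => (hu₂ x).trans (by gcongr; norm_num)⟩,
    fun v hvT hv hv_eq => huniq v ⟨hvT, hv, hv_eq⟩⟩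
end
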